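/- arXiv:math-ph/0601020 — 2 statements merged into one kernel-verified Lean document; each statement's English description precedes it below -/
import Mathlib

section
/- Tangency in the general case: (i) for every k ∈ ℤ∖{n}, Γ_k(t) = Γ_k^{(0)} + O(t) and Γ̃_k(t) = Γ̃_k^{(0)} + O(t) (no poles). (ii) Γ_n(t) = (a_{n+1}²/(a_−(a_{n−1} − a_{n+1})² t²))·(Γ_{n−1}^{(0)} − a_{n−1}² Γ̃_{n−1}^{(0)}) + Γ_n^{(−1)}/t + O(1) and Γ̃_n(t) = (a_{n+1}a_{n−1}/(a_−(a_{n−1} − a_{n+1})² t²))·(Γ_{n−1}^{(0)}/a_{n−1}² − Γ̃_{n−1}^{(0)}) + Γ̃_n^{(−1)}/t + O(1), where Γ_n^{(−1)} and Γ̃_n^{(−1)} are F-linear combinations of Γ_{n+1}^{(0)}, Γ_{n−1}^{(0)}, Γ̃_{n+1}^{(0)}, Γ̃_{n−1}^{(0)}. (iii) Moreover a_−(Γ̃_{n+1}^{(0)} − Γ_{n+1}^{(0)}/a_{n+1}²) = a_+(Γ_{n−1}^{(0)}/a_{n−1}² − Γ̃_{n−1}^{(0)}). -/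
/-!
Common definitions: the matrices `L₁`, `L₂` of the Toeplitz lattice, their powers,
the recursion polynomials `Γ_k` (here `GamA`), `Γ̃_k` (here `GamB`) and their
self-dual version (`GamSD`), together with the notion of formal Laurent
solutions of the (self-dual) Toeplitz lattice.
-/

noncomputable section

namespace SingConf

variable {A : Type*} [CommRing A]

/-- The entry `(L₁)_{ij} = -x_i y_{j-1} + δ_{i+1,j}` (for `j - i ≤ 1`, zero otherwise). -/
def L1e (x y : ℤ → A) (i j : ℤ) : A :=
  if j ≤ i + 1 then -(x i * y (j - 1)) + (if i + 1 = j then 1 else 0) else 0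

/-- The entry `(L₂)_{ij} = -y_j x_{i-1} + δ_{j+1,i}` (for `j - i ≥ -1`, zero otherwise). -/
def L2e (x y : ℤ → A) (i j : ℤ) : A :=
  if i ≤ j + 1 then -(y j * x (i - 1)) + (if j + 1 = i then 1 else 0) else 0

/-- The entry `(L₁^s)_{ij}`; the matrix `L₁` has upper bandwidth 1, so each entry of a
power is a finite sum. -/
def L1pow (x y : ℤ → A) : ℕ → ℤ → ℤ → A
  | 0 => fun i j => if i = j then 1 else 0
  | s + 1 => fun i j => ∑ l ∈ Finset.Icc (j - 1) (i + (s : ℤ)), L1pow x y s i l * L1e x y l j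

/-- The entry `(L₂^s)_{ij}`. -/
def L2pow (x y : ℤ → A) : ℕ → ℤ → ℤ → A
  | 0 => fun i j => if i = j then 1 else 0
  | s + 1 => fun i j => ∑ l ∈ Finset.Icc (i - (s : ℤ)) (j + 1), L2pow x y s i l * L2e x y l j

/-- The recursion polynomial
`Γ_k(x,y;u) = (v_k/y_k)(-(L₁P₁'(L₁))_{k+1,k+1} - (L₂P₂'(L₂))_{k,k}
              + (P₁'(L₁))_{k+1,k} + (P₂'(L₂))_{k,k+1}) + k x_k`
where `P₁(λ) = ∑_{i=1}^N u_i λ^i/i`, `P₂(λ) = ∑_{i=1}^N u_{-i} λ^i/i`, `v_k = 1 - x_k y_k`.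
The apparent denominator `y_k` cancels, thanks to the identities
`(L₁^{i-1})_{k+1,k} - (L₁^i)_{k+1,k+1} = y_k ∑_{l} x_l (L₁^{i-1})_{k+1,l}` and
`(L₂^{i-1})_{k,k+1} - (L₂^i)_{k,k} = y_k ∑_{l} x_{l-1} (L₂^{i-1})_{k,l}`,
which is how the cancellation-free expression below is obtained. -/
def GamA (N : ℕ) (u : ℤ → A) (x y : ℤ → A) (k : ℤ) : A :=
  (1 - x k * y k) *
    ((∑ i ∈ Finset.Icc 1 N, u (i : ℤ) *
        ∑ l ∈ Finset.Icc k (k + (i : ℤ)), x l * L1pow x y (i - 1) (k + 1) l) +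
      ∑ i ∈ Finset.Icc 1 N, u (-(i : ℤ)) *
        ∑ l ∈ Finset.Icc (k - (i : ℤ) + 1) (k + 1), x (l - 1) * L2pow x y (i - 1) k l) +
  (k : A) * x k

/-- The recursion polynomial
`Γ̃_k(x,y;u) = (v_k/x_k)(-(L₁P₁'(L₁))_{k,k} - (L₂P₂'(L₂))_{k+1,k+1}
              + (P₁'(L₁))_{k+1,k} + (P₂'(L₂))_{k,k+1}) + k y_k`,
written in cancellation-free form using
`(L₁^{i-1})_{k+1,k} - (L₁^i)_{k,k} = x_k ∑_{l} y_{l-1} (L₁^{i-1})_{l,k}` and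
`(L₂^{i-1})_{k,k+1} - (L₂^i)_{k+1,k+1} = x_k ∑_{l} y_l (L₂^{i-1})_{l,k+1}`. -/
def GamB (N : ℕ) (u : ℤ → A) (x y : ℤ → A) (k : ℤ) : A :=
  (1 - x k * y k) *
    ((∑ i ∈ Finset.Icc 1 N, u (i : ℤ) *
        ∑ l ∈ Finset.Icc (k - (i : ℤ) + 1) (k + 1), y (l - 1) * L1pow x y (i - 1) l k) +
      ∑ i ∈ Finset.Icc 1 N, u (-(i : ℤ)) *
        ∑ l ∈ Finset.Icc k (k + (i : ℤ)), y l * L2pow x y (i - 1) l (k + 1)) +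
  (k : A) * y k

/-- The self-dual recursion polynomial
`Γ_k(x;u) = (v_k/x_k)(2(P'(L))_{k+1,k} - (LP'(L))_{k+1,k+1} - (LP'(L))_{k,k}) + k x_k`
(where `L = L₁` with `y = x`, `v_k = 1 - x_k²`), in cancellation-free form. -/
def GamSD (N : ℕ) (u : ℕ → A) (x : ℤ → A) (k : ℤ) : A :=
  (1 - x k * x k) *
    (∑ i ∈ Finset.Icc 1 N, u i *
      ((∑ l ∈ Finset.Icc k (k + (i : ℤ)), x l * L1pow x x (i - 1) (k + 1) l) +
        ∑ l ∈ Finset.Icc (k - (i : ℤ) + 1) (k + 1), x (l - 1) * L1pow x x (i - 1) l k)) +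
  (k : A) * x k

variable {K : Type*} [Field K]

/-- `f(t) = O(t^m)` for a formal Laurent series. -/
def BigO (f : LaurentSeries K) (m : ℤ) : Prop := ∀ i < m, f.coeff i = 0

/-- A family `x(t) = (x_k(t))_{k ∈ ℤ}` of formal Laurent series is a solution of the first
vector field of the self-dual Toeplitz lattice: `dx_k/dt = (1 - x_k²)(x_{k+1} - x_{k-1})`;
stated coefficientwise (the coefficient of `t^m` in `dx_k/dt` is `(m+1)·x_k^{(m+1)}`). -/
def IsSolSD (x : ℤ → LaurentSeries K) : Prop :=
  ∀ k m : ℤ, ((m + 1 : ℤ) : K) * (x k).coeff (m + 1) =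
    ((1 - x k * x k) * (x (k + 1) - x (k - 1))).coeff m

/-- A family `(x_k(t), y_k(t))_{k ∈ ℤ}` of formal Laurent series is a solution of the first
Toeplitz vector field: `dx_k/dt = (1 - x_k y_k)(x_{k+1} - x_{k-1})`,
`dy_k/dt = (1 - x_k y_k)(y_{k+1} - y_{k-1})`. -/
def IsSolT (x y : ℤ → LaurentSeries K) : Prop :=
  ∀ k m : ℤ,
    ((m + 1 : ℤ) : K) * (x k).coeff (m + 1) =
      ((1 - x k * y k) * (x (k + 1) - x (k - 1))).coeff m ∧
    ((m + 1 : ℤ) : K) * (y k).coeff (m + 1) =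
      ((1 - x k * y k) * (y (k + 1) - y (k - 1))).coeff m

section Abstract

variable (x y : ℤ → A)

lemma L1pow_zero_of_lt (s : ℕ) (i j : ℤ) (h : i + s < j) : L1pow x y s i j = 0 := by
  cases s with
  | zero => simp [L1pow]; intro h'; simp at h; omega
  | succ s =>
    simp only [L1pow]
    rw [Finset.Icc_eq_empty (by push_cast at h; omega)]
    simp

lemma L1e_zero_of_lt (i j : ℤ) (h : i + 1 < j) : L1e x y i j = 0 := by
  simp [L1e]; intro h'; omega

lemma L1pow_succ_ext (s : ℕ) (i j a b : ℤ) (ha : a ≤ j - 1) (hb : i + s ≤ b) :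
    L1pow x y (s + 1) i j = ∑ l ∈ Finset.Icc a b, L1pow x y s i l * L1e x y l j := by
  simp only [L1pow]
  apply Finset.sum_subset
  · exact Finset.Icc_subset_Icc ha hb
  · intro l hl hl'
    simp only [Finset.mem_Icc, not_and_or, not_le] at hl hl'
    rcases hl' with h | h
    · rw [L1e_zero_of_lt x y l j (by omega), mul_zero]
    · rw [L1pow_zero_of_lt x y s i l (by omega), zero_mul]

lemma L1pow_one (i j : ℤ) : L1pow x y 1 i j = L1e x y i j := by
  rw [L1pow_succ_ext x y 0 i j (min (j - 1) i) i (min_le_left _ _) (by simp)]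
  simp [L1pow]

lemma L1pow_succ_left (s : ℕ) : ∀ (i j a b : ℤ) (_ : a ≤ j - s) (_ : i + 1 ≤ b),
    L1pow x y (s + 1) i j = ∑ l ∈ Finset.Icc a b, L1e x y i l * L1pow x y s l j := by
  induction s with
  | zero =>
    intro i j a b ha hb
    rw [zero_add, L1pow_one]
    simp only [L1pow, mul_ite, mul_one, mul_zero, Finset.sum_ite_eq', Finset.mem_Icc]
    split_ifs with h
    · rfl
    · apply L1e_zero_of_lt; simp at ha; omega
  | succ s ih =>
    intro i j a b ha hb
    push_cast at ha
    rw [L1pow_succ_ext x y (s + 1) i j (j - 1) (b + s) le_rfl (by push_cast; omega)]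
    have : ∀ l ∈ Finset.Icc (j - 1) (b + s), L1pow x y (s + 1) i l * L1e x y l j =
        ∑ m ∈ Finset.Icc a b, L1e x y i m * L1pow x y s m l * L1e x y l j := by
      intro l hl
      simp only [Finset.mem_Icc] at hl
      rw [ih i l a b (by omega) hb, Finset.sum_mul]
    rw [Finset.sum_congr rfl this, Finset.sum_comm]
    refine Finset.sum_congr rfl fun m hm => ?_
    simp only [Finset.mem_Icc] at hm
    rw [L1pow_succ_ext x y s m j (j - 1) (b + s) le_rfl (by omega), Finset.mul_sum]
    simp only [mul_assoc]

lemma L2e_eq (i j : ℤ) : L2e x y i j = L1e y x j i := rfl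

lemma L2pow_eq (s : ℕ) : ∀ i j : ℤ, L2pow x y s i j = L1pow y x s j i := by
  induction s with
  | zero => intro i j; simp [L2pow, L1pow, eq_comm]
  | succ s ih =>
    intro i j
    rw [L1pow_succ_left y x s j i _ _ le_rfl le_rfl]
    simp only [L2pow, ih, L2e_eq, mul_comm]

lemma tele (f : ℤ → A) (a b : ℤ) (h : a ≤ b + 1) :
    ∑ l ∈ Finset.Icc a b, (f (l + 1) - f l) = f (b + 1) - f a := by
  obtain ⟨c, rfl⟩ : ∃ c, b = c - 1 := ⟨b + 1, by ring⟩
  simp only [sub_add_cancel] at h ⊢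
  induction c, h using Int.leInduction with
  | base => simp
  | succ c hc ih =>
    have : Finset.Icc a (c + 1 - 1) = insert c (Finset.Icc a (c - 1)) := by
      ext l; simp only [Finset.mem_Icc, Finset.mem_insert]; omega
    rw [this, Finset.sum_insert (by simp), ih]; ring

def RR (s : ℕ) (i m : ℤ) : A := ∑ l ∈ Finset.Icc m (i + (s : ℤ)), x l * L1pow x y s i l
def CC (s : ℕ) (m j : ℤ) : A := ∑ l ∈ Finset.Icc (j - (s : ℤ)) m, y (l - 1) * L1pow x y s l j

lemma RR_ext (s : ℕ) (i m b : ℤ) (hb : i + s ≤ b) :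
    RR x y s i m = ∑ l ∈ Finset.Icc m b, x l * L1pow x y s i l := by
  apply Finset.sum_subset
  · exact Finset.Icc_subset_Icc le_rfl hb
  · intro l hl hl'
    simp only [Finset.mem_Icc, not_and_or, not_le] at hl hl'
    rw [L1pow_zero_of_lt x y s i l (by omega), mul_zero]

lemma CC_ext (s : ℕ) (m j a : ℤ) (ha : a ≤ j - s) :
    CC x y s m j = ∑ l ∈ Finset.Icc a m, y (l - 1) * L1pow x y s l j := by
  apply Finset.sum_subset
  · exact Finset.Icc_subset_Icc ha le_rfl
  · intro l hl hl'
    simp only [Finset.mem_Icc, not_and_or, not_le] at hl hl'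
    rw [L1pow_zero_of_lt x y s l j (by omega), mul_zero]

lemma RR_sub (s : ℕ) (i m : ℤ) :
    RR x y s i m = x m * L1pow x y s i m + RR x y s i (m + 1) := by
  rw [RR_ext x y s i m (max m (i + s)) (le_max_right _ _),
    RR_ext x y s i (m + 1) (max m (i + s)) (le_max_right _ _)]
  have : Finset.Icc m (max m (i + s)) = insert m (Finset.Icc (m + 1) (max m (i + s))) := by
    ext l; simp only [Finset.mem_Icc, Finset.mem_insert]; omega
  rw [this, Finset.sum_insert (by simp)]

lemma CC_sub (s : ℕ) (m j : ℤ) :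
    CC x y s m j = y (m - 1) * L1pow x y s m j + CC x y s (m - 1) j := by
  rw [CC_ext x y s m j (min m (j - s)) (min_le_right _ _),
    CC_ext x y s (m - 1) j (min m (j - s)) (min_le_right _ _)]
  have : Finset.Icc (min m (j - s)) m = insert m (Finset.Icc (min m (j - s)) (m - 1)) := by
    ext l; simp only [Finset.mem_Icc, Finset.mem_insert]; omega
  rw [this, Finset.sum_insert (by simp)]

lemma L1pow_succ_RR (s : ℕ) (i j : ℤ) :
    L1pow x y (s + 1) i j = L1pow x y s i (j - 1) - y (j - 1) * RR x y s i (j - 1) := by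
  set b := max (j - 1) (i + s)
  rw [L1pow_succ_ext x y s i j (j - 1) b le_rfl (le_max_right _ _),
    RR_ext x y s i (j - 1) b (le_max_right _ _), Finset.mul_sum]
  have : L1pow x y s i (j - 1) = ∑ l ∈ Finset.Icc (j - 1) b, if l = j - 1 then
      L1pow x y s i l else 0 := by
    rw [Finset.sum_ite_eq']; simp [b]
  rw [this, ← Finset.sum_sub_distrib]
  refine Finset.sum_congr rfl fun l hl => ?_
  simp only [Finset.mem_Icc] at hl
  unfold L1e
  rw [if_pos (by omega)]
  by_cases h : l = j - 1
  · rw [if_pos (by omega), if_pos h]; ring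
  · rw [if_neg (by omega), if_neg h]; ring

lemma L1pow_succ_CC (s : ℕ) (i j : ℤ) :
    L1pow x y (s + 1) i j = L1pow x y s (i + 1) j - x i * CC x y s (i + 1) j := by
  set a := min (i + 1) (j - s)
  rw [L1pow_succ_left x y s i j a (i + 1) (min_le_right _ _) le_rfl,
    CC_ext x y s (i + 1) j a (min_le_right _ _), Finset.mul_sum]
  have : L1pow x y s (i + 1) j = ∑ l ∈ Finset.Icc a (i + 1), if l = i + 1 then
      L1pow x y s l j else 0 := by
    rw [Finset.sum_ite_eq']; simp [a]
  rw [this, ← Finset.sum_sub_distrib]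
  refine Finset.sum_congr rfl fun l hl => ?_
  simp only [Finset.mem_Icc] at hl
  unfold L1e
  rw [if_pos (by omega)]
  by_cases h : l = i + 1
  · rw [if_pos (by omega), if_pos h]; ring
  · rw [if_neg (by omega), if_neg h]; ring

variable {x y} (D : Derivation ℤ A A)
  (hx : ∀ k, D (x k) = (1 - x k * y k) * (x (k + 1) - x (k - 1)))
  (hy : ∀ k, D (y k) = (1 - x k * y k) * (y (k + 1) - y (k - 1)))

include hx hy

lemma lax_L (i j : ℤ) : D (L1e x y i j) =
    (1 - x i * y i) * L1e x y (i + 1) j - L1e x y (i - 1) j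
    - L1e x y i (j - 1) * (1 - x (j - 1) * y (j - 1)) + L1e x y i (j + 1)
    + (x (i - 1) * y i - x (j - 1) * y j) * L1e x y i j := by
  have key : D (-(x i * y (j - 1))) =
      -(x i * ((1 - x (j - 1) * y (j - 1)) * (y j - y (j - 2)))
        + y (j - 1) * ((1 - x i * y i) * (x (i + 1) - x (i - 1)))) := by
    rw [map_neg, D.leibniz, hx, hy, smul_eq_mul, smul_eq_mul, sub_add_cancel,
      show j - 1 - 1 = j - 2 by ring]
  rcases lt_or_ge (i + 2) j with h | h
  · rw [L1e_zero_of_lt x y i j (by omega), L1e_zero_of_lt x y (i + 1) j (by omega),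
      L1e_zero_of_lt x y (i - 1) j (by omega), L1e_zero_of_lt x y i (j - 1) (by omega),
      L1e_zero_of_lt x y i (j + 1) (by omega)]
    simp
  rcases eq_or_lt_of_le h with h | h
  · subst h
    rw [L1e_zero_of_lt x y i (i + 2) (by omega),
      L1e_zero_of_lt x y (i - 1) (i + 2) (by omega),
      L1e_zero_of_lt x y i (i + 2 + 1) (by omega)]
    unfold L1e
    rw [if_pos (by omega), if_pos (by omega), if_pos (by omega), if_pos (by omega),
      show i + 2 - 1 - 1 = i by ring, show i + 2 - 1 = i + 1 by ring]
    simp; ring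
  have e1 : j - 1 - 1 = j - 2 := by ring
  have e2 : j + 1 - 1 = j := by ring
  have bulk : ∀ i' j', j' ≤ i' → L1e x y i' j' = -(x i' * y (j' - 1)) := fun i' j' h' => by
    unfold L1e; rw [if_pos (by omega), if_neg (by omega), add_zero]
  have diag : ∀ i' j', j' = i' + 1 → L1e x y i' j' = -(x i' * y (j' - 1)) + 1 := fun i' j' h' => by
    unfold L1e; rw [if_pos (by omega), if_pos (by omega)]
  rcases eq_or_lt_of_le (show j ≤ i + 1 by omega) with h | h
  · rw [L1e_zero_of_lt x y (i - 1) j (by omega),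
      L1e_zero_of_lt x y i (j + 1) (by omega), diag i j h, bulk (i + 1) j (by omega),
      bulk i (j - 1) (by omega), map_add, key]
    subst h
    have e3 : i + 1 - 2 = i - 1 := by ring
    simp [e3]; ring
  · rw [bulk i j (by omega), bulk (i + 1) j (by omega), bulk i (j - 1) (by omega), key]
    by_cases h2 : j = i
    · rw [diag (i - 1) j (by omega), diag i (j + 1) (by omega), e1, e2]; ring
    · rw [bulk (i - 1) j (by omega), bulk i (j + 1) (by omega), e1, e2]; ring

lemma lax_W (s : ℕ) : ∀ i j : ℤ, D (L1pow x y s i j) =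
    (1 - x i * y i) * L1pow x y s (i + 1) j - L1pow x y s (i - 1) j
    - L1pow x y s i (j - 1) * (1 - x (j - 1) * y (j - 1)) + L1pow x y s i (j + 1)
    + (x (i - 1) * y i - x (j - 1) * y j) * L1pow x y s i j := by
  induction s with
  | zero =>
    intro i j
    simp only [L1pow]
    by_cases h : i = j
    · subst h
      rw [if_pos rfl, if_neg (by omega), if_neg (by omega), if_neg (by omega), if_neg (by omega)]
      simp
    · rw [if_neg h]
      by_cases h1 : i + 1 = j
      · subst h1
        rw [if_pos rfl, if_neg (by omega), if_pos (by omega), if_neg (by omega)]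
        simp
      · rw [if_neg h1, if_neg (show ¬ (i = j - 1) by omega)]
        by_cases h2 : i = j + 1
        · subst h2; simp
        · rw [if_neg h2, if_neg (show ¬ (i - 1 = j) by omega)]; simp
  | succ s ih =>
    intro i j
    obtain ⟨a, ha1, ha2⟩ : ∃ a, a ≤ j - 3 ∧ a ≤ i + s := ⟨min (j - 3) (i + s), by simp, by simp⟩
    set b := i + s + 3 with hb
    have e : ∀ i' j', i' ≤ i + 1 → j - 1 ≤ j' → L1pow x y (s + 1) i' j' =
        ∑ l ∈ Finset.Icc a b, L1pow x y s i' l * L1e x y l j' := fun i' j' h1 h2 =>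
      L1pow_succ_ext x y s i' j' a b (by omega) (by omega)
    rw [e i j (by omega) (by omega), e (i + 1) j (by omega) (by omega),
      e (i - 1) j (by omega) (by omega), e i (j - 1) (by omega) (by omega),
      e i (j + 1) (by omega) (by omega), map_sum]
    have t1 := tele (fun l => L1pow x y s i (l - 1) * (1 - x (l - 1) * y (l - 1)) * L1e x y l j)
      a b (by omega)
    have t2 := tele (fun l => L1pow x y s i l * L1e x y (l - 1) j) a b (by omega)
    rw [L1pow_zero_of_lt x y s i (b + 1 - 1) (by omega), L1e_zero_of_lt x y a j (by omega)] at t1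
    rw [L1pow_zero_of_lt x y s i (b + 1) (by omega),
      L1e_zero_of_lt x y (a - 1) j (by omega)] at t2
    have main : ∀ l ∈ Finset.Icc a b, D (L1pow x y s i l * L1e x y l j) =
        (1 - x i * y i) * (L1pow x y s (i + 1) l * L1e x y l j)
        - L1pow x y s (i - 1) l * L1e x y l j
        - (1 - x (j - 1) * y (j - 1)) * (L1pow x y s i l * L1e x y l (j - 1))
        + L1pow x y s i l * L1e x y l (j + 1)
        + (x (i - 1) * y i - x (j - 1) * y j) * (L1pow x y s i l * L1e x y l j)
        + (L1pow x y s i (l + 1 - 1) * (1 - x (l + 1 - 1) * y (l + 1 - 1)) * L1e x y (l + 1) j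
          - L1pow x y s i (l - 1) * (1 - x (l - 1) * y (l - 1)) * L1e x y l j)
        + (L1pow x y s i (l + 1) * L1e x y (l + 1 - 1) j
          - L1pow x y s i l * L1e x y (l - 1) j) := by
      intro l _
      rw [D.leibniz, ih, lax_L D hx hy, smul_eq_mul, smul_eq_mul, add_sub_cancel_right]
      ring
    rw [Finset.sum_congr rfl main]
    simp only [Finset.sum_add_distrib, Finset.sum_sub_distrib, ← Finset.mul_sum] at t1 t2 ⊢
    linear_combination t1 + t2

lemma D_RR (s : ℕ) (i m : ℤ) : D (RR x y s i m) =
    (1 - x i * y i) * RR x y s (i + 1) m - RR x y s (i - 1) m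
    + x (i - 1) * y i * RR x y s i m
    - (1 - x (m - 1) * y (m - 1)) * x m * L1pow x y s i (m - 1)
    - x (m - 1) * L1pow x y s i m := by
  obtain ⟨b, hb1, hb2⟩ : ∃ b, m ≤ b ∧ i + s + 3 ≤ b :=
    ⟨max m (i + s + 3), by simp, by simp⟩
  rw [RR_ext x y s i m b (by omega), RR_ext x y s (i + 1) m b (by omega),
    RR_ext x y s (i - 1) m b (by omega), map_sum]
  have t1 := tele (fun l => L1pow x y s i (l - 1) * (1 - x (l - 1) * y (l - 1)) * x l)
      m b (by omega)
  have t2 := tele (fun l => L1pow x y s i l * x (l - 1)) m b (by omega)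
  rw [L1pow_zero_of_lt x y s i (b + 1 - 1) (by omega)] at t1
  rw [L1pow_zero_of_lt x y s i (b + 1) (by omega)] at t2
  have main : ∀ l ∈ Finset.Icc m b, D (x l * L1pow x y s i l) =
        (1 - x i * y i) * (x l * L1pow x y s (i + 1) l)
        - x l * L1pow x y s (i - 1) l
        + x (i - 1) * y i * (x l * L1pow x y s i l)
        + (L1pow x y s i (l + 1 - 1) * (1 - x (l + 1 - 1) * y (l + 1 - 1)) * x (l + 1)
          - L1pow x y s i (l - 1) * (1 - x (l - 1) * y (l - 1)) * x l)
        + (L1pow x y s i (l + 1) * x (l + 1 - 1)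
          - L1pow x y s i l * x (l - 1)) := by
      intro l _
      rw [D.leibniz, lax_W D hx hy, hx, smul_eq_mul, smul_eq_mul, add_sub_cancel_right]
      ring
  rw [Finset.sum_congr rfl main]
  simp only [Finset.sum_add_distrib, Finset.sum_sub_distrib, ← Finset.mul_sum] at t1 t2 ⊢
  linear_combination t1 + t2

lemma D_CC (s : ℕ) (m j : ℤ) : D (CC x y s m j) =
    y m * L1pow x y s m j + (1 - x m * y m) * y (m - 1) * L1pow x y s (m + 1) j
    - (1 - x (j - 1) * y (j - 1)) * CC x y s m (j - 1) + CC x y s m (j + 1)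
    - x (j - 1) * y j * CC x y s m j := by
  obtain ⟨a, ha1, ha2⟩ : ∃ a, a ≤ m ∧ a ≤ j - s - 3 :=
    ⟨min m (j - s - 3), by simp, by simp⟩
  rw [CC_ext x y s m j a (by omega), CC_ext x y s m (j - 1) a (by omega),
    CC_ext x y s m (j + 1) a (by omega), map_sum]
  have t1 := tele (fun l => y (l - 1) * L1pow x y s (l - 1) j) a m (by omega)
  have t2 := tele (fun l => (1 - x (l - 1) * y (l - 1)) * y (l - 1 - 1) * L1pow x y s l j)
    a m (by omega)
  rw [L1pow_zero_of_lt x y s (a - 1) j (by omega)] at t1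
  rw [L1pow_zero_of_lt x y s a j (by omega)] at t2
  have main : ∀ l ∈ Finset.Icc a m, D (y (l - 1) * L1pow x y s l j) =
        - (1 - x (j - 1) * y (j - 1)) * (y (l - 1) * L1pow x y s l (j - 1))
        + y (l - 1) * L1pow x y s l (j + 1)
        - x (j - 1) * y j * (y (l - 1) * L1pow x y s l j)
        + (y (l + 1 - 1) * L1pow x y s (l + 1 - 1) j - y (l - 1) * L1pow x y s (l - 1) j)
        + ((1 - x (l + 1 - 1) * y (l + 1 - 1)) * y (l + 1 - 1 - 1) * L1pow x y s (l + 1) j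
          - (1 - x (l - 1) * y (l - 1)) * y (l - 1 - 1) * L1pow x y s l j) := by
      intro l _
      rw [D.leibniz, lax_W D hx hy, hy, smul_eq_mul, smul_eq_mul, add_sub_cancel_right,
        sub_add_cancel]
      ring
  rw [Finset.sum_congr rfl main]
  rw [add_sub_cancel_right] at t1 t2
  simp only [Finset.sum_add_distrib, Finset.sum_sub_distrib, ← Finset.mul_sum] at t1 t2 ⊢
  linear_combination t1 + t2

lemma D_alpha (s : ℕ) (k : ℤ) :
    D ((1 - x k * y k) * RR x y s (k + 1) k) =
      (1 - x k * y k) * ((1 - x (k + 1) * y (k + 1)) * RR x y s (k + 1 + 1) (k + 1)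
        - (1 - x (k - 1) * y (k - 1)) * RR x y s (k - 1 + 1) (k - 1))
      - (x (k + 1) - x (k - 1)) * (y k * ((1 - x k * y k) * RR x y s (k + 1) k)
        - x k * ((1 - x k * y k) * CC x y s (k + 1) k)) := by
  have h1 := RR_sub x y s (k + 1 + 1) k
  have h2 := RR_sub x y s k (k - 1)
  have h3 := L1pow_succ_RR x y s k k
  have h4 := L1pow_succ_CC x y s k k
  have h5 := L1pow_succ_RR x y s (k + 1) k
  have h6 := L1pow_succ_CC x y s (k + 1) k
  have h7 := RR_sub x y s (k + 1) (k - 1)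
  have h8 := CC_sub x y s (k + 1 + 1) k
  rw [D.leibniz, D_RR D hx hy, map_sub, D.leibniz, hx, hy]
  simp only [smul_eq_mul, Derivation.map_one_eq_zero, add_sub_cancel_right, sub_add_cancel] at *
  linear_combination (1 - x k * y k) * ((1 - x (k + 1) * y (k + 1)) * h1 + h2
    + x (k - 1) * (h4 - h3) + x k * ((h5 - y (k - 1) * h7) - (h6 - x (k + 1) * h8)))

lemma D_beta (s : ℕ) (k : ℤ) :
    D ((1 - x k * y k) * CC x y s (k + 1) k) =
      (1 - x k * y k) * ((1 - x (k + 1) * y (k + 1)) * CC x y s (k + 1 + 1) (k + 1)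
        - (1 - x (k - 1) * y (k - 1)) * CC x y s (k - 1 + 1) (k - 1))
      + (y (k + 1) - y (k - 1)) * (y k * ((1 - x k * y k) * RR x y s (k + 1) k)
        - x k * ((1 - x k * y k) * CC x y s (k + 1) k)) := by
  have h1 := CC_sub x y s (k + 1) (k - 1)
  have h2 := CC_sub x y s (k + 1 + 1) (k + 1)
  have h3 := L1pow_succ_RR x y s (k + 1) (k + 1)
  have h4 := L1pow_succ_CC x y s (k + 1) (k + 1)
  have h5 := L1pow_succ_RR x y s (k + 1) k
  have h6 := L1pow_succ_CC x y s (k + 1) k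
  have h7 := RR_sub x y s (k + 1) (k - 1)
  have h8 := CC_sub x y s (k + 1 + 1) k
  rw [D.leibniz, D_CC D hx hy, map_sub, D.leibniz, hx, hy]
  simp only [smul_eq_mul, Derivation.map_one_eq_zero, add_sub_cancel_right, sub_add_cancel] at *
  linear_combination (1 - x k * y k) * (-(1 - x (k - 1) * y (k - 1)) * h1 - h2
    + y (k + 1) * (h4 - h3) + y k * ((h5 - y (k - 1) * h7) - (h6 - x (k + 1) * h8)))

end Abstract

section Gam

variable (x y : ℤ → A)

lemma GamA_eq (N : ℕ) (u : ℤ → A) (k : ℤ) : GamA N u x y k =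
    (∑ i ∈ Finset.Icc 1 N, (u (i : ℤ) * ((1 - x k * y k) * RR x y (i - 1) (k + 1) k)
      + u (-(i : ℤ)) * ((1 - y k * x k) * CC y x (i - 1) (k + 1) k))) + (k : A) * x k := by
  unfold GamA
  rw [← Finset.sum_add_distrib, Finset.mul_sum]
  congr 1
  refine Finset.sum_congr rfl fun i hi => ?_
  rw [Finset.mem_Icc] at hi
  unfold RR CC
  have e1 : k + 1 + ((i - 1 : ℕ) : ℤ) = k + i := by omega
  have e2 : k - ((i - 1 : ℕ) : ℤ) = k - i + 1 := by omega
  rw [e1, e2]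
  simp only [L2pow_eq]
  ring

lemma GamB_eq (N : ℕ) (u : ℤ → A) (k : ℤ) :
    GamB N u x y k = GamA N (fun i => u (-i)) y x k := by
  unfold GamA GamB
  simp only [L2pow_eq, neg_neg, mul_comm (y k) (x k)]
  ring

variable {x y} (D : Derivation ℤ A A)
  (hx : ∀ k, D (x k) = (1 - x k * y k) * (x (k + 1) - x (k - 1)))
  (hy : ∀ k, D (y k) = (1 - x k * y k) * (y (k + 1) - y (k - 1)))
include hx hy

lemma D_GamA (N : ℕ) (hN : 1 ≤ N) (u : ℤ → A)
    (hu : ∀ i, D (u i) = if i = 1 ∨ i = -1 then 1 else 0) (k : ℤ) :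
    D (GamA N u x y k) = (1 - x k * y k) * (GamA N u x y (k + 1) - GamA N u x y (k - 1))
      - (x (k + 1) - x (k - 1)) * (y k * GamA N u x y k - x k * GamB N u x y k) := by
  have hx' : ∀ k, D (x k) = (1 - y k * x k) * (x (k + 1) - x (k - 1)) := fun k => by
    rw [hx, mul_comm (y k)]
  have hy' : ∀ k, D (y k) = (1 - y k * x k) * (y (k + 1) - y (k - 1)) := fun k => by
    rw [hy, mul_comm (y k)]
  simp only [GamB_eq, GamA_eq, neg_neg]
  have main : ∀ i ∈ Finset.Icc 1 N,
      D (u (i : ℤ) * ((1 - x k * y k) * RR x y (i - 1) (k + 1) k)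
      + u (-(i : ℤ)) * ((1 - y k * x k) * CC y x (i - 1) (k + 1) k)) =
      (if i = 1 then (1 - x k * y k) * (x (k + 1) + x (k - 1)) else 0)
      + (1 - x k * y k) * (
        (u (i : ℤ) * ((1 - x (k + 1) * y (k + 1)) * RR x y (i - 1) (k + 1 + 1) (k + 1))
         + u (-(i : ℤ)) * ((1 - y (k + 1) * x (k + 1)) * CC y x (i - 1) (k + 1 + 1) (k + 1)))
        - (u (i : ℤ) * ((1 - x (k - 1) * y (k - 1)) * RR x y (i - 1) (k - 1 + 1) (k - 1))
         + u (-(i : ℤ)) * ((1 - y (k - 1) * x (k - 1)) * CC y x (i - 1) (k - 1 + 1) (k - 1))))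
      - (x (k + 1) - x (k - 1)) * (
        y k * (u (i : ℤ) * ((1 - x k * y k) * RR x y (i - 1) (k + 1) k)
          + u (-(i : ℤ)) * ((1 - y k * x k) * CC y x (i - 1) (k + 1) k))
        - x k * (u (-(i : ℤ)) * ((1 - y k * x k) * RR y x (i - 1) (k + 1) k)
          + u (i : ℤ) * ((1 - x k * y k) * CC x y (i - 1) (k + 1) k))) := by
    intro i hi
    rw [Finset.mem_Icc] at hi
    rw [map_add, D.leibniz (u (i : ℤ)), D.leibniz (u (-(i : ℤ))), D_alpha D hx hy, D_beta D hy' hx', hu, hu]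
    simp only [smul_eq_mul]
    by_cases h : i = 1
    · subst h
      have r : RR x y (1 - 1) (k + 1) k = x (k + 1) := by
        simp [RR, L1pow]
      have c : CC y x (1 - 1) (k + 1) k = x (k - 1) := by
        simp [CC, L1pow]
      rw [r, c]
      simp only [if_true, Nat.cast_one, true_or, or_true]
      ring
    · rw [if_neg h, if_neg (by omega), if_neg (by omega)]
      ring
  rw [map_add, map_sum, Finset.sum_congr rfl main, D.leibniz, hx]
  simp only [Finset.sum_add_distrib, Finset.sum_sub_distrib, ← Finset.mul_sum,
    Finset.sum_ite_eq', Finset.mem_Icc, le_refl, hN, and_self, if_true]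
  simp only [Derivation.map_intCast, smul_eq_mul]
  push_cast
  ring

lemma D_GamB (N : ℕ) (hN : 1 ≤ N) (u : ℤ → A)
    (hu : ∀ i, D (u i) = if i = 1 ∨ i = -1 then 1 else 0) (k : ℤ) :
    D (GamB N u x y k) = (1 - x k * y k) * (GamB N u x y (k + 1) - GamB N u x y (k - 1))
      + (y (k + 1) - y (k - 1)) * (y k * GamA N u x y k - x k * GamB N u x y k) := by
  have hx' : ∀ k, D (x k) = (1 - y k * x k) * (x (k + 1) - x (k - 1)) := fun k => by
    rw [hx, mul_comm (y k)]
  have hy' : ∀ k, D (y k) = (1 - y k * x k) * (y (k + 1) - y (k - 1)) := fun k => by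
    rw [hy, mul_comm (y k)]
  have := D_GamA D hy' hx' N hN (fun i => u (-i)) (fun i => by
    rw [hu]; congr 1; apply propext; omega) k
  simp only [GamB_eq, neg_neg] at this ⊢
  rw [this]
  ring
end Gam

section RegAbs
variable (S : Subring A) (x y : ℤ → A) (c d : ℤ)
  (hxS : ∀ l, c ≤ l → l ≤ d → x l ∈ S) (hyS : ∀ l, c ≤ l → l ≤ d → y l ∈ S)
include hxS hyS

lemma L1pow_mem (s : ℕ) : ∀ i j : ℤ, c ≤ i → c ≤ j - s → i + s ≤ d → j - 1 ≤ d →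
    L1pow x y s i j ∈ S := by
  induction s with
  | zero => intro i j _ _ _ _; simp only [L1pow]; split_ifs <;> simp [S.one_mem]
  | succ s ih =>
    intro i j h1 h2 h3 h4
    push_cast at h2 h3
    simp only [L1pow]
    refine S.sum_mem fun l hl => ?_
    rw [Finset.mem_Icc] at hl
    refine S.mul_mem (ih i l h1 (by omega) (by omega) (by omega)) ?_
    unfold L1e
    have := S.mul_mem (hxS l (by omega) (by omega)) (hyS (j - 1) (by omega) (by omega))
    split_ifs
    · exact S.add_mem (S.neg_mem this) S.one_mem
    · exact S.add_mem (S.neg_mem this) S.zero_mem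
    · exact S.zero_mem

lemma RR_mem (s : ℕ) (i m : ℤ) (h1 : c ≤ i) (h2 : c ≤ m - s) (h3 : i + s ≤ d) :
    RR x y s i m ∈ S := by
  refine S.sum_mem fun l hl => ?_
  rw [Finset.mem_Icc] at hl
  exact S.mul_mem (hxS l (by omega) (by omega))
    (L1pow_mem S x y c d hxS hyS s i l h1 (by omega) (by omega) (by omega))

lemma CC_mem (s : ℕ) (m j : ℤ) (h1 : c ≤ j - s - 1) (h2 : m + s ≤ d) (h3 : j - 1 ≤ d) :
    CC x y s m j ∈ S := by
  refine S.sum_mem fun l hl => ?_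
  rw [Finset.mem_Icc] at hl
  exact S.mul_mem (hyS (l - 1) (by omega) (by omega))
    (L1pow_mem S x y c d hxS hyS s l j (by omega) (by omega) (by omega) (by omega))

lemma GamA_mem (N : ℕ) (u : ℤ → A) (hu : ∀ i, u i ∈ S) (k : ℤ) (h1 : c ≤ k - N)
    (h2 : k + N ≤ d) : GamA N u x y k ∈ S := by
  have X := hxS k (by omega) (by omega)
  have Y := hyS k (by omega) (by omega)
  rw [GamA_eq]
  refine S.add_mem (S.sum_mem fun i hi => ?_) (S.mul_mem (intCast_mem S k) X)
  rw [Finset.mem_Icc] at hi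
  refine S.add_mem (S.mul_mem (hu _) (S.mul_mem (S.sub_mem S.one_mem (S.mul_mem X Y)) ?_))
    (S.mul_mem (hu _) (S.mul_mem (S.sub_mem S.one_mem (S.mul_mem Y X)) ?_))
  · exact RR_mem S x y c d hxS hyS _ _ _ (by omega) (by omega) (by omega)
  · exact CC_mem S y x c d hyS hxS _ _ _ (by omega) (by omega) (by omega)

lemma GamB_mem (N : ℕ) (u : ℤ → A) (hu : ∀ i, u i ∈ S) (k : ℤ) (h1 : c ≤ k - N)
    (h2 : k + N ≤ d) : GamB N u x y k ∈ S := by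
  rw [GamB_eq]
  exact GamA_mem S y x c d hyS hxS N _ (fun i => hu _) k h1 h2

end RegAbs

/-- integer derivations, with the canonical instances. -/
abbrev IDer (A : Type*) [CommRing A] := Derivation ℤ A A

def mkIDer (A : Type*) [CommRing A] (f : A → A) (h0 : f 0 = 0)
    (ha : ∀ a b, f (a + b) = f a + f b) (h : ∀ a b, f (a * b) = a * f b + b * f a) : IDer A :=
  Derivation.mk' (AddMonoidHom.toIntLinearMap
    { toFun := f, map_zero' := h0, map_add' := ha }) h

lemma mkIDer_apply (A : Type*) [CommRing A] (f : A → A) (h0 : f 0 = 0)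
    (ha : ∀ a b, f (a + b) = f a + f b) (h : ∀ a b, f (a * b) = a * f b + b * f a) (a : A) :
    mkIDer A f h0 ha h a = f a := rfl

section Laurent

variable {K : Type*} [Field K]

lemma coeff_mul_BigO {f g : LaurentSeries K} {a b : ℤ} (hf : BigO f a) (hg : BigO g b) (m : ℤ) :
    (f * g).coeff m = ∑ i ∈ Finset.Icc a (m - b), f.coeff i * g.coeff (m - i) := by
  rw [HahnSeries.coeff_mul]
  refine Finset.sum_of_injOn (fun p => p.1) ?_ ?_ ?_ ?_
  · rintro ⟨p1, p2⟩ hp ⟨q1, q2⟩ hq h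
    simp only [Finset.mem_coe, Finset.mem_antidiagonal] at hp hq h
    ext
    · exact h
    · simp only; omega
  · rintro ⟨p1, p2⟩ hp
    simp only [Finset.mem_coe, Finset.mem_antidiagonal, HahnSeries.mem_support] at hp
    simp only [Finset.coe_Icc, Set.mem_Icc]
    constructor
    · by_contra h; exact hp.1 (hf _ (by omega))
    · by_contra h; exact hp.2.1 (hg _ (by omega))
  · intro i hi hi'
    by_contra hne
    apply hi'
    refine ⟨(i, m - i), ?_, rfl⟩
    simp only [Finset.mem_coe, Finset.mem_antidiagonal, HahnSeries.mem_support]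
    exact ⟨left_ne_zero_of_mul hne, right_ne_zero_of_mul hne, by ring⟩
  · rintro ⟨p1, p2⟩ hp
    simp only [Finset.mem_antidiagonal] at hp
    simp only
    rw [show m - p1 = p2 by omega]

lemma BigO.mul {f g : LaurentSeries K} {a b c : ℤ} (hf : BigO f a) (hg : BigO g b)
    (h : c ≤ a + b) : BigO (f * g) c := by
  intro m hm
  rw [coeff_mul_BigO hf hg, Finset.Icc_eq_empty (by omega), Finset.sum_empty]

lemma BigO.add {f g : LaurentSeries K} {a : ℤ} (hf : BigO f a) (hg : BigO g a) :
    BigO (f + g) a := fun m hm => by rw [HahnSeries.coeff_add, hf m hm, hg m hm, add_zero]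

lemma BigO.sub {f g : LaurentSeries K} {a : ℤ} (hf : BigO f a) (hg : BigO g a) :
    BigO (f - g) a := fun m hm => by rw [HahnSeries.coeff_sub, hf m hm, hg m hm, sub_zero]

lemma BigO.mono {f : LaurentSeries K} {a b : ℤ} (hf : BigO f a) (h : b ≤ a) :
    BigO f b := fun m hm => hf m (by omega)

lemma BigO_one : BigO (1 : LaurentSeries K) 0 := fun m hm => by
  rw [HahnSeries.coeff_one, if_neg (by omega)]

lemma BigO.c0 {f g : LaurentSeries K} {a b : ℤ} (hf : BigO f a) (hg : BigO g b) (m : ℤ)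
    (hm : m = a + b) : (f * g).coeff m = f.coeff a * g.coeff b := by
  rw [coeff_mul_BigO hf hg, hm, add_sub_cancel_right, Finset.Icc_self, Finset.sum_singleton,
    add_sub_cancel_left]

lemma BigO.c1 {f g : LaurentSeries K} {a b : ℤ} (hf : BigO f a) (hg : BigO g b) (m a' b' : ℤ)
    (hm : m = a + b + 1) (ha : a' = a + 1) (hb : b' = b + 1) :
    (f * g).coeff m = f.coeff a * g.coeff b' + f.coeff a' * g.coeff b := by
  subst ha hb
  have : Finset.Icc a (m - b) = {a, a + 1} := by
    ext l; simp only [Finset.mem_Icc, Finset.mem_insert, Finset.mem_singleton]; omega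
  rw [coeff_mul_BigO hf hg, this, Finset.sum_pair (by omega), show m - a = b + 1 by omega,
    show m - (a + 1) = b by omega]

lemma exists_BigO (f : LaurentSeries K) : ∃ a, BigO f a :=
  ⟨f.order, fun _ hm => HahnSeries.coeff_eq_zero_of_lt_order hm⟩

lemma BigO.div {v g : LaurentSeries K} {r m : ℤ} (hv : BigO v r) (hv0 : v.coeff r ≠ 0)
    (h : BigO (v * g) (r + m)) : BigO g m := by
  by_contra hg
  have hg0 : g ≠ 0 := by
    rintro rfl; exact hg (fun i _ => by simp)
  have ho : g.order < m := by
    by_contra ho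
    exact hg fun i hi => HahnSeries.coeff_eq_zero_of_lt_order (by omega)
  have h1 : BigO g g.order := fun _ hm => HahnSeries.coeff_eq_zero_of_lt_order hm
  have := hv.c0 h1 _ rfl
  rw [h _ (by omega)] at this
  exact mul_ne_zero hv0 (HahnSeries.coeff_order_eq_zero.not.mpr hg0) this.symm

/-- Euler operator. -/
def eulF (f : LaurentSeries K) : LaurentSeries K where
  coeff m := (m : K) * f.coeff m
  isPWO_support' := f.isPWO_support.mono fun m hm => by
    simp only [Function.mem_support] at hm
    exact right_ne_zero_of_mul hm

lemma eulF_coeff (f : LaurentSeries K) (m : ℤ) : (eulF f).coeff m = (m : K) * f.coeff m := rfl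

lemma eulF_mul (f g : LaurentSeries K) : eulF (f * g) = f * eulF g + g * eulF f := by
  obtain ⟨a, hf⟩ := exists_BigO f
  obtain ⟨b, hg⟩ := exists_BigO g
  have hf' : BigO (eulF f) a := fun m hm => by rw [eulF_coeff, hf m hm, mul_zero]
  have hg' : BigO (eulF g) b := fun m hm => by rw [eulF_coeff, hg m hm, mul_zero]
  rw [mul_comm g]
  ext m
  rw [eulF_coeff, HahnSeries.coeff_add, coeff_mul_BigO hf hg, coeff_mul_BigO hf hg',
    coeff_mul_BigO hf' hg, Finset.mul_sum, ← Finset.sum_add_distrib]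
  refine Finset.sum_congr rfl fun i _ => ?_
  rw [eulF_coeff, eulF_coeff]
  push_cast
  ring

/-- `d/dt`. -/
def ddt : IDer (LaurentSeries K) :=
  mkIDer (LaurentSeries K) (fun f => HahnSeries.single (-1 : ℤ) (1 : K) * eulF f)
    (by
      have : eulF (0 : LaurentSeries K) = 0 := by
        ext m; rw [eulF_coeff, HahnSeries.coeff_zero, mul_zero]
      rw [this, mul_zero])
    (fun f g => by
      have : eulF (f + g) = eulF f + eulF g := by
        ext m
        rw [HahnSeries.coeff_add, eulF_coeff, eulF_coeff, eulF_coeff, HahnSeries.coeff_add, mul_add]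
      rw [this, mul_add])
    (fun f g => by rw [eulF_mul]; ring)

lemma ddt_coeff (f : LaurentSeries K) (m : ℤ) :
    (ddt f).coeff m = ((m + 1 : ℤ) : K) * f.coeff (m + 1) := by
  unfold ddt
  rw [mkIDer_apply, HahnSeries.coeff_single_mul, one_mul, eulF_coeff, sub_neg_eq_add]

lemma BigO.ddt {f : LaurentSeries K} (hf : BigO f 0) : BigO (ddt f) 0 := by
  intro m hm
  rw [ddt_coeff]
  rcases eq_or_lt_of_le (show m + 1 ≤ 0 by omega) with h | h
  · rw [h]; simp
  · rw [hf _ h, mul_zero]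

def regS : Subring (LaurentSeries K) where
  carrier := {f | BigO f 0}
  mul_mem' hf hg := BigO.mul hf hg (by simp)
  one_mem' := BigO_one
  add_mem' hf hg := BigO.add hf hg
  zero_mem' := fun _ _ => by simp
  neg_mem' := fun {f} hf m hm => by rw [HahnSeries.coeff_neg, hf m hm, neg_zero]

end Laurent

section Main
variable {F : Type*} [Field F]

lemma ddt_sol {x y : ℤ → LaurentSeries F} (hsol : IsSolT x y) :
    (∀ k, ddt (x k) = (1 - x k * y k) * (x (k + 1) - x (k - 1))) ∧
    (∀ k, ddt (y k) = (1 - x k * y k) * (y (k + 1) - y (k - 1))) := by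
  constructor <;> intro k <;> ext m <;> rw [ddt_coeff]
  · exact (hsol k m).1
  · exact (hsol k m).2

lemma ddt_u {u : ℤ → F} {ut : ℤ → LaurentSeries F}
    (hut : ∀ i : ℤ, ut i = HahnSeries.C (u i) +
      (if i = 1 ∨ i = -1 then HahnSeries.single (1 : ℤ) (1 : F) else 0)) (i : ℤ) :
    ddt (ut i) = if i = 1 ∨ i = -1 then 1 else 0 := by
  have h1 : ddt (HahnSeries.C (u i) : LaurentSeries F) = 0 := by
    ext m
    rw [ddt_coeff, HahnSeries.C_apply, HahnSeries.coeff_single]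
    by_cases h : m + 1 = 0
    · rw [h]; simp
    · rw [if_neg h]; simp
  have h2 : ddt (HahnSeries.single (1 : ℤ) (1 : F)) = 1 := by
    ext m
    rw [ddt_coeff, HahnSeries.coeff_single, HahnSeries.coeff_one]
    by_cases h : m = 0
    · simp [h]
    · rw [if_neg (by omega), if_neg h, mul_zero]
  rw [hut, map_add, h1, zero_add]
  split_ifs
  · exact h2
  · exact map_zero _

lemma ut_reg {u : ℤ → F} {ut : ℤ → LaurentSeries F}
    (hut : ∀ i : ℤ, ut i = HahnSeries.C (u i) +
      (if i = 1 ∨ i = -1 then HahnSeries.single (1 : ℤ) (1 : F) else 0)) (i : ℤ) :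
    BigO (ut i) 0 := by
  rw [hut]
  refine BigO.add (fun m hm => ?_) ?_
  · rw [HahnSeries.C_apply, HahnSeries.coeff_single, if_neg (by omega)]
  · split_ifs
    · intro m hm; rw [HahnSeries.coeff_single, if_neg (by omega)]
    · intro m hm; simp

/-- linearised system -/
structure LinSys (x y G Gt : ℤ → LaurentSeries F) : Prop where
  g : ∀ k, ddt (G k) = (1 - x k * y k) * (G (k + 1) - G (k - 1))
      - (x (k + 1) - x (k - 1)) * (y k * G k - x k * Gt k)
  gt : ∀ k, ddt (Gt k) = (1 - x k * y k) * (Gt (k + 1) - Gt (k - 1))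
      + (y (k + 1) - y (k - 1)) * (y k * G k - x k * Gt k)

variable {x y G Gt : ℤ → LaurentSeries F} (L : LinSys x y G Gt) (n : ℤ) (N : ℕ)
  (hnopole : ∀ k, k ≠ n → BigO (x k) 0 ∧ BigO (y k) 0)
  (hv : ∀ k, 2 ≤ |k - n| → 1 - (x k).coeff 0 * (y k).coeff 0 ≠ 0)

include hnopole in
lemma v_reg (k : ℤ) (hk : k ≠ n) : BigO (1 - x k * y k) 0 :=
  BigO_one.sub ((hnopole k hk).1.mul (hnopole k hk).2 (by simp))

include hnopole in
lemma v_coeff0 (k : ℤ) (hk : k ≠ n) :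
    (1 - x k * y k).coeff 0 = 1 - (x k).coeff 0 * (y k).coeff 0 := by
  rw [HahnSeries.coeff_sub, (hnopole k hk).1.c0 (hnopole k hk).2 0 (by simp)]
  simp

include L hnopole hv in
lemma reg_right (hbase : ∀ k, n + N + 1 ≤ k → BigO (G k) 0 ∧ BigO (Gt k) 0) (d : ℕ) :
    ∀ k, n + 1 ≤ k → n + N + 1 ≤ k + d → BigO (G k) 0 ∧ BigO (Gt k) 0 := by
  induction d with
  | zero => intro k _ h; exact hbase k (by simpa using h)
  | succ d ih =>
    intro k hk h
    push_cast at h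
    have h1 := ih (k + 1) (by omega) (by omega)
    have h2 := ih (k + 2) (by omega) (by omega)
    have a1 := hnopole (k + 1) (by omega)
    have a2 := hnopole (k + 2) (by omega)
    have v := v_reg n hnopole (k + 1) (by omega)
    have v0 : (1 - x (k + 1) * y (k + 1)).coeff 0 ≠ 0 := by
      rw [v_coeff0 n hnopole _ (by omega)]
      exact hv _ (by rw [abs_of_nonneg (by omega)]; omega)
    have q : BigO (y (k + 1) * G (k + 1) - x (k + 1) * Gt (k + 1)) 0 :=
      (a1.2.mul h1.1 (by simp)).sub (a1.1.mul h1.2 (by simp))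
    have e := L.g (k + 1)
    have e' := L.gt (k + 1)
    rw [show k + 1 + 1 = k + 2 by ring, show k + 1 - 1 = k by ring] at e e'
    have a0 := hnopole k (by omega)
    constructor
    · apply BigO.div v v0
      rw [show (1 - x (k + 1) * y (k + 1)) * G k = (1 - x (k + 1) * y (k + 1)) * G (k + 2)
        - ddt (G (k + 1)) - (x (k + 2) - x k) * (y (k + 1) * G (k + 1) - x (k + 1) * Gt (k + 1))
        by linear_combination e]
      exact ((v.mul h2.1 (by simp)).sub h1.1.ddt).sub ((a2.1.sub a0.1).mul q (by simp))
    · apply BigO.div v v0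
      rw [show (1 - x (k + 1) * y (k + 1)) * Gt k = (1 - x (k + 1) * y (k + 1)) * Gt (k + 2)
        - ddt (Gt (k + 1)) + (y (k + 2) - y k) * (y (k + 1) * G (k + 1) - x (k + 1) * Gt (k + 1))
        by linear_combination e']
      exact ((v.mul h2.2 (by simp)).sub h1.2.ddt).add ((a2.2.sub a0.2).mul q (by simp))

include L hnopole hv in
lemma reg_left (hbase : ∀ k, k ≤ n - N - 1 → BigO (G k) 0 ∧ BigO (Gt k) 0) (d : ℕ) :
    ∀ k, k ≤ n - 1 → k - d ≤ n - N - 1 → BigO (G k) 0 ∧ BigO (Gt k) 0 := by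
  induction d with
  | zero => intro k _ h; exact hbase k (by simpa using h)
  | succ d ih =>
    intro k hk h
    push_cast at h
    have h1 := ih (k - 1) (by omega) (by omega)
    have h2 := ih (k - 2) (by omega) (by omega)
    have a1 := hnopole (k - 1) (by omega)
    have a2 := hnopole (k - 2) (by omega)
    have v := v_reg n hnopole (k - 1) (by omega)
    have v0 : (1 - x (k - 1) * y (k - 1)).coeff 0 ≠ 0 := by
      rw [v_coeff0 n hnopole _ (by omega)]
      exact hv _ (by rw [abs_of_nonpos (by omega)]; omega)
    have q : BigO (y (k - 1) * G (k - 1) - x (k - 1) * Gt (k - 1)) 0 :=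
      (a1.2.mul h1.1 (by simp)).sub (a1.1.mul h1.2 (by simp))
    have e := L.g (k - 1)
    have e' := L.gt (k - 1)
    rw [show k - 1 + 1 = k by ring, show k - 1 - 1 = k - 2 by ring] at e e'
    have a0 := hnopole k (by omega)
    constructor
    · apply BigO.div v v0
      rw [show (1 - x (k - 1) * y (k - 1)) * G k = (1 - x (k - 1) * y (k - 1)) * G (k - 2)
        + ddt (G (k - 1)) + (x k - x (k - 2)) * (y (k - 1) * G (k - 1) - x (k - 1) * Gt (k - 1))
        by linear_combination -e]
      exact ((v.mul h2.1 (by simp)).add h1.1.ddt).add ((a0.1.sub a2.1).mul q (by simp))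
    · apply BigO.div v v0
      rw [show (1 - x (k - 1) * y (k - 1)) * Gt k = (1 - x (k - 1) * y (k - 1)) * Gt (k - 2)
        + ddt (Gt (k - 1)) - (y k - y (k - 2)) * (y (k - 1) * G (k - 1) - x (k - 1) * Gt (k - 1))
        by linear_combination -e']
      exact ((v.mul h2.2 (by simp)).add h1.2.ddt).sub ((a0.2.sub a2.2).mul q (by simp))

/-- extraction of the double pole from a relation `v * g = r + f * q`. -/
lemma pole_extract {v g r f q : LaurentSeries F} {w : F} (hv : BigO v 1) (hw : v.coeff 1 = w)
    (hw0 : w ≠ 0) (hr : BigO r 0) (hf : BigO f (-1)) (hq : BigO q 0) (h : v * g = r + f * q) :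
    BigO g (-2) ∧ w * g.coeff (-2) = f.coeff (-1) * q.coeff 0 := by
  have hR : BigO (r + f * q) (-1) := (hr.mono (by simp)).add (hf.mul hq (by simp))
  have hg : BigO g (-2) := by
    apply BigO.div hv (by rw [hw]; exact hw0)
    rw [h]; exact hR.mono (by simp)
  refine ⟨hg, ?_⟩
  rw [← hw, ← hv.c0 hg (-1) (by norm_num), h, HahnSeries.coeff_add, hr _ (by norm_num), zero_add,
    hf.c0 hq (-1) (by norm_num)]

end Main

end SingConf

open SingConf

variable (F : Type*) [Field F] [CharZero F] (n : ℤ) (N : ℕ)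

/-- tangency, general case. With `(x(t), y(t))` a formal Laurent solution
of the first Toeplitz vector field having the stated pole structure and leading data
(`a_{n±1}` = `an1`/`am1`, `a_±` = `ap`/`am`), and `Γ_k(t), Γ̃_k(t)` as in the context:
(i) for `k ≠ n` the series `Γ_k(t), Γ̃_k(t)` have no pole;
(ii) `Γ_n(t)` and `Γ̃_n(t)` have (at worst) a double pole with the stated leading
coefficients, and the residues are `F`-linear combinations of
`Γ_{n±1}^{(0)}, Γ̃_{n±1}^{(0)}`;
(iii) `a₋(Γ̃_{n+1}^{(0)} - Γ_{n+1}^{(0)}/a_{n+1}²) = a₊(Γ_{n-1}^{(0)}/a_{n-1}² - Γ̃_{n-1}^{(0)})`. -/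
theorem statement6 (hN : 1 ≤ N)
    (u : ℤ → F) (huN : u (N : ℤ) ≠ 0) (huN' : u (-(N : ℤ)) ≠ 0)
    (x y : ℤ → LaurentSeries F) (hsol : IsSolT x y)
    (an1 am1 ap am : F)
    (hnopole : ∀ k, k ≠ n → BigO (x k) 0 ∧ BigO (y k) 0)
    (hv : ∀ k, 2 ≤ |k - n| → 1 - (x k).coeff 0 * (y k).coeff 0 ≠ 0)
    (hx1 : (x (n + 1)).coeff 0 = an1) (hx1' : (x (n - 1)).coeff 0 = am1)
    (hy1 : (y (n + 1)).coeff 0 = an1⁻¹) (hy1' : (y (n - 1)).coeff 0 = am1⁻¹)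
    (hx1t : (x (n + 1)).coeff 1 = an1 * ap) (hx1t' : (x (n - 1)).coeff 1 = am1 * am)
    (hy1t : (y (n + 1)).coeff 1 = -(ap / am1)) (hy1t' : (y (n - 1)).coeff 1 = -(am / an1))
    (hreg : an1 * am1 * (an1 - am1) ≠ 0) (hreg' : ap * am ≠ 0)
    (hxn : BigO (x n) (-1)) (hyn : BigO (y n) (-1))
    (hxnc : (x n).coeff (-1) = am1 * an1 / (am1 - an1))
    (hync : (y n).coeff (-1) = -1 / (am1 - an1))
    (ut : ℤ → LaurentSeries F)
    (hut : ∀ i : ℤ, ut i = HahnSeries.C (u i) +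
      (if i = 1 ∨ i = -1 then HahnSeries.single (1 : ℤ) (1 : F) else 0))
    (G Gt : ℤ → LaurentSeries F)
    (hG : ∀ k, G k = GamA N ut x y k) (hGt : ∀ k, Gt k = GamB N ut x y k) :
    -- (i): no poles away from n
    ((∀ k, k ≠ n → BigO (G k) 0 ∧ BigO (Gt k) 0) ∧
    -- (ii): double pole at n, with explicit leading coefficient and residue a linear
    -- combination of Γ_{n±1}^{(0)}, Γ̃_{n±1}^{(0)}
      BigO (G n) (-2) ∧ BigO (Gt n) (-2) ∧
      (G n).coeff (-2) = an1 ^ 2 / (am * (am1 - an1) ^ 2) *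
        ((G (n - 1)).coeff 0 - am1 ^ 2 * (Gt (n - 1)).coeff 0) ∧
      (Gt n).coeff (-2) = an1 * am1 / (am * (am1 - an1) ^ 2) *
        ((G (n - 1)).coeff 0 / am1 ^ 2 - (Gt (n - 1)).coeff 0) ∧
      (∃ c1 c2 c3 c4 d1 d2 d3 d4 : F,
        (G n).coeff (-1) = c1 * (G (n + 1)).coeff 0 + c2 * (G (n - 1)).coeff 0 +
          c3 * (Gt (n + 1)).coeff 0 + c4 * (Gt (n - 1)).coeff 0 ∧
        (Gt n).coeff (-1) = d1 * (G (n + 1)).coeff 0 + d2 * (G (n - 1)).coeff 0 +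
          d3 * (Gt (n + 1)).coeff 0 + d4 * (Gt (n - 1)).coeff 0)) ∧
    -- (iii): the compatibility relation
    am * ((Gt (n + 1)).coeff 0 - (G (n + 1)).coeff 0 / an1 ^ 2) =
      ap * ((G (n - 1)).coeff 0 / am1 ^ 2 - (Gt (n - 1)).coeff 0) := by
  have hb0 : an1 ≠ 0 := by rintro rfl; simp at hreg
  have ha0 : am1 ≠ 0 := by rintro rfl; simp at hreg
  have hd0 : am1 - an1 ≠ 0 := by
    intro h; apply hreg; rw [show an1 - am1 = -(am1 - an1) by ring, h]; ring
  have hap0 : ap ≠ 0 := left_ne_zero_of_mul hreg'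
  have ham0 : am ≠ 0 := right_ne_zero_of_mul hreg'
  obtain ⟨hx, hy⟩ := ddt_sol hsol
  have hu := ddt_u hut
  have L : LinSys x y G Gt := by
    constructor <;> intro k
    · simp only [hG, hGt]; exact D_GamA ddt hx hy N hN ut hu k
    · simp only [hG, hGt]; exact D_GamB ddt hx hy N hN ut hu k
  have hbase : ∀ k, n + N + 1 ≤ k ∨ k ≤ n - N - 1 → BigO (G k) 0 ∧ BigO (Gt k) 0 := by
    intro k hk
    have h1 : ∀ l, k - N ≤ l → l ≤ k + N → x l ∈ regS := fun l h h' =>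
      (hnopole l (by omega)).1
    have h2 : ∀ l, k - N ≤ l → l ≤ k + N → y l ∈ regS := fun l h h' =>
      (hnopole l (by omega)).2
    rw [hG, hGt]
    exact ⟨GamA_mem regS x y _ _ h1 h2 N ut (ut_reg hut) k le_rfl le_rfl,
      GamB_mem regS x y _ _ h1 h2 N ut (ut_reg hut) k le_rfl le_rfl⟩
  have hreg0 : ∀ k, k ≠ n → BigO (G k) 0 ∧ BigO (Gt k) 0 := by
    intro k hk
    rcases lt_or_gt_of_ne hk with h | h
    · exact reg_left L n N hnopole hv (fun k hk => hbase k (Or.inr hk)) N k (by omega) (by omega)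
    · exact reg_right L n N hnopole hv (fun k hk => hbase k (Or.inl hk)) N k (by omega) (by omega)
  -- data at n - 1
  obtain ⟨xm, ym⟩ := hnopole (n - 1) (by omega)
  obtain ⟨xm2, ym2⟩ := hnopole (n - 2) (by omega)
  obtain ⟨xp, yp⟩ := hnopole (n + 1) (by omega)
  obtain ⟨xp2, yp2⟩ := hnopole (n + 2) (by omega)
  obtain ⟨gm, gtm⟩ := hreg0 (n - 1) (by omega)
  obtain ⟨gm2, gtm2⟩ := hreg0 (n - 2) (by omega)
  obtain ⟨gp, gtp⟩ := hreg0 (n + 1) (by omega)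
  obtain ⟨gp2, gtp2⟩ := hreg0 (n + 2) (by omega)
  have c1m : ∀ i : ℤ, i ≠ 0 → (1 : LaurentSeries F).coeff i = 0 := fun i hi => by
    rw [HahnSeries.coeff_one, if_neg hi]
  have vm : BigO (1 - x (n - 1) * y (n - 1)) 1 := by
    intro i hi
    rcases eq_or_lt_of_le (show i ≤ 0 by omega) with h | h
    · rw [h, v_coeff0 n hnopole _ (by omega), hx1', hy1', mul_inv_cancel₀ ha0, sub_self]
    · exact v_reg n hnopole _ (by omega) i h
  have vp : BigO (1 - x (n + 1) * y (n + 1)) 1 := by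
    intro i hi
    rcases eq_or_lt_of_le (show i ≤ 0 by omega) with h | h
    · rw [h, v_coeff0 n hnopole _ (by omega), hx1, hy1, mul_inv_cancel₀ hb0, sub_self]
    · exact v_reg n hnopole _ (by omega) i h
  have wm : (1 - x (n - 1) * y (n - 1)).coeff 1 = am * (am1 - an1) / an1 := by
    rw [HahnSeries.coeff_sub, c1m 1 (by norm_num), xm.c1 ym 1 1 1 rfl rfl rfl,
      hx1', hy1', hx1t', hy1t']
    field_simp
    ring
  have wp : (1 - x (n + 1) * y (n + 1)).coeff 1 = ap * (an1 - am1) / am1 := by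
    rw [HahnSeries.coeff_sub, c1m 1 (by norm_num), xp.c1 yp 1 1 1 rfl rfl rfl,
      hx1, hy1, hx1t, hy1t]
    field_simp
    ring
  have wm0 : am * (am1 - an1) / an1 ≠ 0 := div_ne_zero (mul_ne_zero ham0 hd0) hb0
  have wp0 : ap * (an1 - am1) / am1 ≠ 0 :=
    div_ne_zero (mul_ne_zero hap0 (by rw [← neg_sub]; exact neg_ne_zero.mpr hd0)) ha0
  have qm : BigO (y (n - 1) * G (n - 1) - x (n - 1) * Gt (n - 1)) 0 :=
    (ym.mul gm (by simp)).sub (xm.mul gtm (by simp))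
  have qp : BigO (y (n + 1) * G (n + 1) - x (n + 1) * Gt (n + 1)) 0 :=
    (yp.mul gp (by simp)).sub (xp.mul gtp (by simp))
  have qm0 : (y (n - 1) * G (n - 1) - x (n - 1) * Gt (n - 1)).coeff 0 =
      am1⁻¹ * (G (n - 1)).coeff 0 - am1 * (Gt (n - 1)).coeff 0 := by
    rw [HahnSeries.coeff_sub, ym.c0 gm 0 (by simp), xm.c0 gtm 0 (by simp), hx1', hy1']
  have qp0 : (y (n + 1) * G (n + 1) - x (n + 1) * Gt (n + 1)).coeff 0 =
      an1⁻¹ * (G (n + 1)).coeff 0 - an1 * (Gt (n + 1)).coeff 0 := by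
    rw [HahnSeries.coeff_sub, yp.c0 gp 0 (by simp), xp.c0 gtp 0 (by simp), hx1, hy1]
  have em := L.g (n - 1)
  have em' := L.gt (n - 1)
  have ep := L.g (n + 1)
  rw [show n - 1 + 1 = n by ring, show n - 1 - 1 = n - 2 by ring] at em em'
  rw [show n + 1 + 1 = n + 2 by ring, show n + 1 - 1 = n by ring] at ep
  have fxm : BigO (x n - x (n - 2)) (-1) := hxn.sub (xm2.mono (by simp))
  have fym : BigO (y n - y (n - 2)) (-1) := hyn.sub (ym2.mono (by simp))
  have fym' : BigO (y (n - 2) - y n) (-1) := (ym2.mono (by simp)).sub hyn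
  have fxp : BigO (x n - x (n + 2)) (-1) := hxn.sub (xp2.mono (by simp))
  obtain ⟨gn, Pm⟩ := pole_extract (g := G n) vm wm wm0
    ((vm.mul gm2 (by simp)).add gm.ddt : BigO ((1 - x (n - 1) * y (n - 1)) * G (n - 2)
      + ddt (G (n - 1))) 0) fxm qm (by linear_combination -em)
  obtain ⟨gtn, Qm⟩ := pole_extract (g := Gt n) vm wm wm0
    ((vm.mul gtm2 (by simp)).add gtm.ddt : BigO ((1 - x (n - 1) * y (n - 1)) * Gt (n - 2)
      + ddt (Gt (n - 1))) 0) fym' qm (by linear_combination -em')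
  obtain ⟨-, Pp⟩ := pole_extract (g := G n) vp wp wp0
    ((vp.mul gp2 (by simp)).sub gp.ddt : BigO ((1 - x (n + 1) * y (n + 1)) * G (n + 2)
      - ddt (G (n + 1))) 0) fxp qp (by linear_combination ep)
  rw [qm0, HahnSeries.coeff_sub, hxnc, xm2 _ (by norm_num), sub_zero] at Pm
  rw [qm0, HahnSeries.coeff_sub, hync, ym2 _ (by norm_num), zero_sub] at Qm
  rw [qp0, HahnSeries.coeff_sub, hxnc, xp2 _ (by norm_num), sub_zero] at Pp
  have hP : (G n).coeff (-2) = an1 ^ 2 / (am * (am1 - an1) ^ 2) *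
        ((G (n - 1)).coeff 0 - am1 ^ 2 * (Gt (n - 1)).coeff 0) := by
    apply mul_left_cancel₀ wm0
    rw [Pm]
    field_simp
  have hQ : (Gt n).coeff (-2) = an1 * am1 / (am * (am1 - an1) ^ 2) *
        ((G (n - 1)).coeff 0 / am1 ^ 2 - (Gt (n - 1)).coeff 0) := by
    apply mul_left_cancel₀ wm0
    rw [Qm]
    field_simp
    try ring
  -- the equations at n
  have en := congrArg (fun f => HahnSeries.coeff f (-2)) (L.g n)
  have en' := congrArg (fun f => HahnSeries.coeff f (-2)) (L.gt n)
  have vn : BigO (1 - x n * y n) (-2) :=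
    (BigO_one.mono (by norm_num)).sub (hxn.mul hyn (by norm_num))
  have q3 : BigO (y n * G n - x n * Gt n) (-3) :=
    (hyn.mul gn (by norm_num)).sub (hxn.mul gtn (by norm_num))
  have q3c : (y n * G n - x n * Gt n).coeff (-3) =
      (y n).coeff (-1) * (G n).coeff (-2) - (x n).coeff (-1) * (Gt n).coeff (-2) := by
    rw [HahnSeries.coeff_sub, hyn.c0 gn (-3) (by norm_num), hxn.c0 gtn (-3) (by norm_num)]
  have q2c : (y n * G n - x n * Gt n).coeff (-2) =
      (y n).coeff (-1) * (G n).coeff (-1) + (y n).coeff 0 * (G n).coeff (-2)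
      - ((x n).coeff (-1) * (Gt n).coeff (-1) + (x n).coeff 0 * (Gt n).coeff (-2)) := by
    rw [HahnSeries.coeff_sub, hyn.c1 gn (-2) 0 (-1) (by norm_num) (by norm_num) (by norm_num),
      hxn.c1 gtn (-2) 0 (-1) (by norm_num) (by norm_num) (by norm_num)]
  simp only [ddt_coeff, HahnSeries.coeff_sub, HahnSeries.coeff_add] at en en'
  rw [vn.c0 (gp.sub gm) (-2) (by norm_num),
    (xp.sub xm).c1 q3 (-2) 1 (-2) (by norm_num) (by norm_num) (by norm_num), q2c, q3c,
    HahnSeries.coeff_sub, HahnSeries.coeff_sub, HahnSeries.coeff_sub,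
    hx1, hx1', hxnc, hync] at en
  rw [vn.c0 (gtp.sub gtm) (-2) (by norm_num),
    (yp.sub ym).c1 q3 (-2) 1 (-2) (by norm_num) (by norm_num) (by norm_num), q2c, q3c,
    HahnSeries.coeff_sub, HahnSeries.coeff_sub, HahnSeries.coeff_sub,
    hy1, hy1', hxnc, hync] at en'
  rw [show (-2 : ℤ) + 1 = -1 by norm_num] at en en'
  generalize (1 : LaurentSeries F).coeff (-2) - (x n * y n).coeff (-2) = V2 at en en'
  generalize (x n).coeff 0 = x0 at en en'
  generalize (y n).coeff 0 = y0 at en en'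
  generalize (x (n + 1) - x (n - 1)).coeff 1 = D1 at en en'
  generalize (y (n + 1) - y (n - 1)).coeff 1 = D2 at en en'
  have s1 : (an1 - am1) * (-1 / (am1 - an1)) = 1 := by
    field_simp; ring
  have s2 : (an1 - am1) * (am1 * an1 / (am1 - an1)) = -(am1 * an1) := by
    field_simp; ring
  have s3 : am1 * an1 * ((an1⁻¹ - am1⁻¹) * (-1 / (am1 - an1))) = -1 := by
    field_simp
  have s4 : am1 * an1 * ((an1⁻¹ - am1⁻¹) * (am1 * an1 / (am1 - an1))) = am1 * an1 := by
    field_simp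
  have hiii : am * ((Gt (n + 1)).coeff 0 - (G (n + 1)).coeff 0 / an1 ^ 2) =
      ap * ((G (n - 1)).coeff 0 / am1 ^ 2 - (Gt (n - 1)).coeff 0) := by
    rw [hP] at Pp
    have e1 : ap * (an1 - am1) / am1 * (an1 ^ 2 / (am * (am1 - an1) ^ 2) *
        ((G (n - 1)).coeff 0 - am1 ^ 2 * (Gt (n - 1)).coeff 0)) * (am * (am1 - an1) / (am1 * an1 ^ 2))
        = -(ap * ((G (n - 1)).coeff 0 / am1 ^ 2 - (Gt (n - 1)).coeff 0)) := by
      field_simp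
      ring
    have e2 : am1 * an1 / (am1 - an1) * (an1⁻¹ * (G (n + 1)).coeff 0
        - an1 * (Gt (n + 1)).coeff 0) * (am * (am1 - an1) / (am1 * an1 ^ 2))
        = -(am * ((Gt (n + 1)).coeff 0 - (G (n + 1)).coeff 0 / an1 ^ 2)) := by
      field_simp
      ring
    linear_combination e2 - e1 + (am * (am1 - an1) / (am1 * an1 ^ 2)) * Pp
  refine ⟨⟨hreg0, gn, gtn, hP, hQ, ?_⟩, hiii⟩
  push_cast at en en'
  generalize hX : am1 * an1 / (am1 - an1) = X at *
  generalize hY : -1 / (am1 - an1) = Y at *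
  have p1 : (G n).coeff (-1) = am1 * an1 * (V2 * ((Gt (n + 1)).coeff 0 - (Gt (n - 1)).coeff 0)
      + (an1⁻¹ - am1⁻¹) * (y0 * (G n).coeff (-2) - x0 * (Gt n).coeff (-2))
      + D2 * (Y * (G n).coeff (-2) - X * (Gt n).coeff (-2))) := by
    linear_combination (am1 * an1) * en' + (G n).coeff (-1) * s3 - (Gt n).coeff (-1) * s4
  have p2 : (Gt n).coeff (-1) = (am1 * an1)⁻¹ *
      (V2 * ((G (n + 1)).coeff 0 - (G (n - 1)).coeff 0)
      - (an1 - am1) * (y0 * (G n).coeff (-2) - x0 * (Gt n).coeff (-2))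
      - D1 * (Y * (G n).coeff (-2) - X * (Gt n).coeff (-2))) := by
    rw [eq_inv_mul_iff_mul_eq₀ (mul_ne_zero ha0 hb0)]
    linear_combination en - (G n).coeff (-1) * s1 + (Gt n).coeff (-1) * s2
  rw [hP, hQ] at p1 p2
  generalize an1 ^ 2 / (am * (am1 - an1) ^ 2) = κ at p1 p2
  generalize an1 * am1 / (am * (am1 - an1) ^ 2) = μ at p1 p2
  refine ⟨0, am1 * an1 * ((an1⁻¹ - am1⁻¹) * (y0 * κ - x0 * μ / am1 ^ 2)
      + D2 * (Y * κ - X * μ / am1 ^ 2)), am1 * an1 * V2,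
    am1 * an1 * (-V2 + (an1⁻¹ - am1⁻¹) * (-y0 * κ * am1 ^ 2 + x0 * μ)
      + D2 * (-Y * κ * am1 ^ 2 + X * μ)),
    (am1 * an1)⁻¹ * V2, (am1 * an1)⁻¹ * (-V2 - (an1 - am1) * (y0 * κ - x0 * μ / am1 ^ 2)
      - D1 * (Y * κ - X * μ / am1 ^ 2)), 0,
    (am1 * an1)⁻¹ * (-(an1 - am1) * (-y0 * κ * am1 ^ 2 + x0 * μ)
      - D1 * (-Y * κ * am1 ^ 2 + X * μ)), ?_, ?_⟩
  · rw [p1]; ring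
  · rw [p2]; ring
end
end

section
/- Suppose in addition that Γ_k(t) = O(t) and Γ̃_k(t) = O(t) for all k ∈ ℤ with k ≠ n+1, that Γ_{n−1}(t) = O(t²), and that Γ_{n+1}(t) = O(t). Then Γ_k(t) = 0 = Γ̃_k(t), as formal Laurent series in t, for all k ∈ ℤ. -/
/-!
Common definitions: the matrices `L₁`, `L₂` of the Toeplitz lattice, their powers,
the recursion polynomials `Γ_k` (here `GamA`), `Γ̃_k` (here `GamB`) and their
self-dual version (`GamSD`), together with the notion of formal Laurent
solutions of the (self-dual) Toeplitz lattice.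
-/

noncomputable section

open SingConf

namespace Tg

section lattice
variable {A : Type*} [CommRing A]

lemma sum_ext_zero {f : ℤ → A} {a b c d : ℤ} (hac : c ≤ a) (hbd : b ≤ d)
    (hf : ∀ l, (l < a ∨ b < l) → f l = 0) :
    ∑ l ∈ Finset.Icc a b, f l = ∑ l ∈ Finset.Icc c d, f l := by
  apply Finset.sum_subset
  · intro l hl
    simp only [Finset.mem_Icc] at hl ⊢
    omega
  · intro l _ hl
    apply hf
    simp only [Finset.mem_Icc] at hl
    omega

lemma tele (f : ℤ → A) (a : ℤ) (m : ℕ) :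
    ∑ l ∈ Finset.Icc a (a + m), (f (l + 1) - f l) = f (a + m + 1) - f a := by
  induction m with
  | zero => simp
  | succ m ih =>
    have : Finset.Icc a (a + (m + 1 : ℕ)) = insert (a + m + 1) (Finset.Icc a (a + m)) := by
      ext l; simp only [Finset.mem_Icc, Finset.mem_insert]; push_cast; omega
    rw [this, Finset.sum_insert (by simp), ih]
    push_cast
    rw [← add_assoc]; ring

lemma tele' (f : ℤ → A) (a b : ℤ) (h : a ≤ b) :
    ∑ l ∈ Finset.Icc a b, (f (l + 1) - f l) = f (b + 1) - f a := by
  obtain ⟨m, hm⟩ := Int.le.dest h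
  rw [← hm]; exact tele f a m

lemma L1e_zero (x y : ℤ → A) {i j : ℤ} (h : i + 1 < j) : L1e x y i j = 0 := by
  unfold L1e; rw [if_neg (by omega)]

lemma pow_zero' (x y : ℤ → A) (s : ℕ) : ∀ {i j : ℤ}, i + s < j → L1pow x y s i j = 0 := by
  induction s with
  | zero => intro i j h; simp only [L1pow]; rw [if_neg]; simp at h; omega
  | succ s ih =>
    intro i j h
    simp only [L1pow]
    push_cast at h
    rw [Finset.Icc_eq_empty (by omega)]; simp

lemma pow_succ_win (x y : ℤ → A) (s : ℕ) (i j a b : ℤ) (ha : a ≤ j - 1) (hb : i + s ≤ b) :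
    L1pow x y (s + 1) i j = ∑ l ∈ Finset.Icc a b, L1pow x y s i l * L1e x y l j := by
  simp only [L1pow]
  apply sum_ext_zero ha hb
  rintro l (h | h)
  · rw [L1e_zero x y (by omega), mul_zero]
  · rw [pow_zero' x y s (by omega), zero_mul]

lemma pow_one' (x y : ℤ → A) (i j : ℤ) : L1pow x y 1 i j = L1e x y i j := by
  rw [pow_succ_win x y 0 i j (min (j-1) i) i (by omega) (by simp)]
  rw [Finset.sum_eq_single i]
  · simp [L1pow]
  · intro l _ h
    simp [L1pow, h.symm]
  · intro h; exfalso; apply h; simp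

/-- left multiplication -/
lemma pow_succ_left (x y : ℤ → A) (s : ℕ) : ∀ (i j a b : ℤ), a ≤ j - s → i + 1 ≤ b →
    L1pow x y (s + 1) i j = ∑ l ∈ Finset.Icc a b, L1e x y i l * L1pow x y s l j := by
  induction s with
  | zero =>
    intro i j a b ha hb
    rw [pow_one']
    by_cases h : j ≤ b
    · rw [Finset.sum_eq_single j]
      · simp [L1pow]
      · intro l _ h
        simp [L1pow, h]
      · intro h'; exfalso; apply h'; simp at ha ⊢; omega
    · rw [L1e_zero x y (by omega), Finset.sum_eq_zero]
      intro l hl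
      simp only [Finset.mem_Icc] at hl
      simp only [L1pow]
      rw [if_neg (by omega), mul_zero]
  | succ s ih =>
    intro i j a b ha hb
    push_cast at ha
    rw [pow_succ_win x y (s+1) i j (j-1) (max (i + s + 1) (b + s)) le_rfl (by push_cast; omega)]
    have h1 : ∀ l ∈ Finset.Icc (j-1) (max (i + s + 1) (b + s)),
        L1pow x y (s+1) i l * L1e x y l j =
        ∑ m ∈ Finset.Icc a b, L1e x y i m * (L1pow x y s m l * L1e x y l j) := by
      intro l hl
      simp only [Finset.mem_Icc] at hl
      rw [ih i l a b (by omega) hb, Finset.sum_mul]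
      exact Finset.sum_congr rfl (fun _ _ => by ring)
    rw [Finset.sum_congr rfl h1, Finset.sum_comm]
    apply Finset.sum_congr rfl
    intro m hm
    simp only [Finset.mem_Icc] at hm
    rw [← Finset.mul_sum,
      ← pow_succ_win x y s m j (j-1) (max (i + s + 1) (b + s)) le_rfl (by omega)]

lemma L1e_refl (x y : ℤ → A) (i j : ℤ) :
    L1e (fun k => y (-k)) (fun k => x (-k)) i j = L1e x y (1 - j) (1 - i) := by
  unfold L1e
  have h1 : (j ≤ i + 1) ↔ (1 - i ≤ 1 - j + 1) := by omega
  have h2 : (i + 1 = j) ↔ (1 - j + 1 = 1 - i) := by omega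
  simp only [h1, h2]
  have e1 : -(j - 1) = 1 - j := by ring
  have e2 : 1 - i - 1 = -i := by ring
  rw [e1, e2, mul_comm]

lemma pow_refl (x y : ℤ → A) (s : ℕ) : ∀ i j : ℤ,
    L1pow (fun k => y (-k)) (fun k => x (-k)) s i j = L1pow x y s (1 - j) (1 - i) := by
  induction s with
  | zero => 
    intro i j; simp only [L1pow]
    have h1 : (i = j) ↔ (1 - j = 1 - i) := by omega
    simp only [h1]
  | succ s ih =>
    intro i j
    rw [pow_succ_left x y s (1-j) (1-i) (1 - (i+s)) (1 - (j-1)) (by omega) (by omega)]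
    simp only [L1pow]
    refine Finset.sum_nbij' (fun l => 1 - l) (fun l => 1 - l) ?_ ?_ ?_ ?_ ?_
    · intro l hl; simp only [Finset.mem_Icc] at hl ⊢; omega
    · intro l hl; simp only [Finset.mem_Icc] at hl ⊢; omega
    · intro l _; ring
    · intro l _; ring
    · intro l _
      rw [ih, L1e_refl, mul_comm]

lemma L2e_eq (x y : ℤ → A) (i j : ℤ) : L2e x y i j = L1e y x j i := by
  unfold L2e L1e; rfl

lemma L2pow_eq (x y : ℤ → A) (s : ℕ) : ∀ i j : ℤ, L2pow x y s i j = L1pow y x s j i := by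
  induction s with
  | zero => intro i j; simp only [L1pow, L2pow, eq_comm]
  | succ s ih =>
    intro i j
    rw [pow_succ_left y x s j i (i - s) (j+1) le_rfl le_rfl]
    simp only [L2pow]
    exact Finset.sum_congr rfl (fun l _ => by rw [ih, L2e_eq, mul_comm])

/-- Toeplitz flow for a derivation. -/
structure IsT (D : Derivation ℤ A A) (x y : ℤ → A) : Prop where
  hx : ∀ k, D (x k) = (1 - x k * y k) * (x (k + 1) - x (k - 1))
  hy : ∀ k, D (y k) = (1 - x k * y k) * (y (k + 1) - y (k - 1))

lemma IsT.symm {D : Derivation ℤ A A} {x y : ℤ → A} (h : IsT D x y) : IsT D y x :=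
  ⟨fun k => by rw [h.hy, mul_comm (x k)], fun k => by rw [h.hx, mul_comm (x k)]⟩

lemma IsT.refl {D : Derivation ℤ A A} {x y : ℤ → A} (h : IsT D x y) :
    IsT (-D) (fun k => y (-k)) (fun k => x (-k)) := by
  have e1 : ∀ k : ℤ, -(k+1) = -k - 1 := fun k => by ring
  have e2 : ∀ k : ℤ, -(k-1) = -k + 1 := fun k => by ring
  constructor
  · intro k
    simp only [Derivation.neg_apply, h.hy, e1, e2]; ring
  · intro k
    simp only [Derivation.neg_apply, h.hx, e1, e2]; ring

lemma laxL {D : Derivation ℤ A A} {x y : ℤ → A} (h : IsT D x y) (i j : ℤ) :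
    D (L1e x y i j) =
      (1 - x i * y i) * L1e x y (i+1) j + x (i-1) * y i * L1e x y i j - L1e x y (i-1) j
      - L1e x y i (j-1) * (1 - x (j-1) * y (j-1)) - L1e x y i j * (x (j-1) * y j)
      + L1e x y i (j+1) := by
  rcases lt_trichotomy j (i+1) with hj | hj | hj
  · have c1 : j ≤ i + 1 + 1 := by omega
    have c2 : j ≤ i + 1 := by omega
    have c3 : j ≤ i - 1 + 1 := by omega
    have c4 : j - 1 ≤ i + 1 := by omega
    have c5 : j + 1 ≤ i + 1 := by omega
    have d1 : ¬ (i + 1 + 1 = j) := by omega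
    have d2 : ¬ (i + 1 = j) := by omega
    have d4 : ¬ (i + 1 = j - 1) := by omega
    have e5 : (i + 1 = j + 1) ↔ (i - 1 + 1 = j) := by omega
    have f : j + 1 - 1 = j := by ring
    simp only [L1e, if_pos c1, if_pos c2, if_pos c3, if_pos c4, if_pos c5, if_neg d1, if_neg d2,
      if_neg d4, e5, f]
    have g : j - 1 + 1 = j := by ring
    simp only [add_zero, map_neg, Derivation.leibniz, h.hx, h.hy, smul_eq_mul, g]
    ring
  · subst hj
    have c1 : i + 1 ≤ i + 1 + 1 := by omega
    have c3 : ¬ (i + 1 ≤ i - 1 + 1) := by omega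
    have c4 : i ≤ i + 1 := by omega
    have c5 : ¬ (i + 1 + 1 ≤ i + 1) := by omega
    have d1 : ¬ (i + 1 + 1 = i + 1) := by omega
    have d4 : ¬ (i + 1 = i) := by omega
    have f : i + 1 - 1 = i := by ring
    simp only [L1e, f, if_pos c1, if_neg c3, if_pos c4, if_neg c5, if_neg d1,
      if_neg d4, le_refl, if_true]
    simp only [add_zero, map_neg, map_add, Derivation.map_one_eq_zero, Derivation.leibniz, h.hx,
      h.hy, smul_eq_mul]
    ring
  · rw [L1e_zero x y hj, L1e_zero x y (i := i - 1) (by omega),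
      L1e_zero x y (i := i) (j := j + 1) (by omega)]
    rcases eq_or_lt_of_le (show i + 2 ≤ j by omega) with hj2 | hj2
    · subst hj2
      have f : i + 2 - 1 = i + 1 := by ring
      have f2 : i + 1 + 1 = i + 2 := by ring
      have f1 : i + 1 - 1 = i := by ring
      simp only [L1e, f, f1, f2, le_refl, if_true, map_zero]
      ring
    · rw [L1e_zero x y (i := i+1) (by omega), L1e_zero x y (i := i) (j := j - 1) (by omega)]
      simp

lemma laxM {D : Derivation ℤ A A} {x y : ℤ → A} (h : IsT D x y) (s : ℕ) : ∀ i j : ℤ,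
    D (L1pow x y s i j) =
      (1 - x i * y i) * L1pow x y s (i+1) j + x (i-1) * y i * L1pow x y s i j
      - L1pow x y s (i-1) j
      - L1pow x y s i (j-1) * (1 - x (j-1) * y (j-1)) - L1pow x y s i j * (x (j-1) * y j)
      + L1pow x y s i (j+1) := by
  induction s with
  | zero =>
    intro i j
    simp only [L1pow]
    have e1 : (i + 1 = j) ↔ (i = j - 1) := by omega
    have e2 : (i - 1 = j) ↔ (i = j + 1) := by omega
    have e0 : D (if i = j then (1 : A) else 0) = 0 := by split_ifs <;> simp
    rw [e0]
    simp only [e1, e2]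
    by_cases c1 : i = j - 1
    · subst c1
      have : ¬ (j - 1 = j) := by omega
      have : ¬ (j - 1 = j + 1) := by omega
      simp [*]
    · by_cases c2 : i = j
      · subst c2; simp [c1]
      · simp [c1, c2]
  | succ s ih =>
    intro i j
    obtain ⟨a, b, ha, hb, hab⟩ : ∃ a b : ℤ, a ≤ j - 5 ∧ i + s + 5 ≤ b ∧ a ≤ b :=
      ⟨min (j-5) (i+s+5), i+s+5, by omega, by omega, by omega⟩
    rw [pow_succ_win x y s i j a b (by omega) (by omega),
      pow_succ_win x y s (i+1) j a b (by omega) (by omega),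
      pow_succ_win x y s (i-1) j a b (by omega) (by omega),
      pow_succ_win x y s i (j-1) a b (by omega) (by omega),
      pow_succ_win x y s i (j+1) a b (by omega) (by omega)]
    rw [map_sum]
    have key := tele' (fun l => L1pow x y s i (l-1) * (1 - x (l-1) * y (l-1)) * L1e x y l j
      + L1pow x y s i l * L1e x y (l-1) j) a b hab
    rw [pow_zero' x y s (i := i) (j := b+1) (by omega),
      pow_zero' x y s (i := i) (j := b+1-1) (by omega),
      L1e_zero x y (i := a) (j := j) (by omega), L1e_zero x y (i := a-1) (j := j) (by omega)] at key
    simp only [zero_mul, mul_zero, add_zero, sub_zero] at key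
    rw [← sub_eq_zero]
    rw [← key]
    simp only [Finset.mul_sum, Finset.sum_mul, ← Finset.sum_add_distrib, ← Finset.sum_sub_distrib]
    apply Finset.sum_congr rfl
    intro l _
    rw [Derivation.leibniz, ih, laxL h]
    have f : l + 1 - 1 = l := by ring
    simp only [f, smul_eq_mul]
    ring

def Af (x y : ℤ → A) (s : ℕ) (k : ℤ) : A :=
  ∑ l ∈ Finset.Icc k (k + (s + 1 : ℕ)), x l * L1pow x y s (k + 1) l

def Bf (x y : ℤ → A) (s : ℕ) (k : ℤ) : A :=
  ∑ l ∈ Finset.Icc (k - (s + 1 : ℕ) + 1) (k + 1), y (l - 1) * L1pow x y s l k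

lemma Af_win (x y : ℤ → A) (s : ℕ) (k b : ℤ) (hb : k + 1 + s ≤ b) :
    Af x y s k = ∑ l ∈ Finset.Icc k b, x l * L1pow x y s (k + 1) l := by
  unfold Af
  apply Finset.sum_subset
  · intro l hl
    simp only [Finset.mem_Icc] at hl ⊢
    push_cast at hl
    omega
  · intro l h1 hl
    simp only [Finset.mem_Icc] at hl h1
    push_cast at hl
    rw [pow_zero' x y s (by omega), mul_zero]

lemma Bf_refl (x y : ℤ → A) (s : ℕ) (k : ℤ) :
    Bf x y s k = Af (fun k => y (-k)) (fun k => x (-k)) s (-k) := by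
  unfold Af Bf
  refine Finset.sum_nbij' (fun l => 1 - l) (fun l => 1 - l) ?_ ?_ ?_ ?_ ?_
  · intro l hl; simp only [Finset.mem_Icc] at hl ⊢; omega
  · intro l hl; simp only [Finset.mem_Icc] at hl ⊢; omega
  · intro l _; ring
  · intro l _; ring
  · intro l _
    rw [pow_refl]
    have e1 : -(1 - l) = l - 1 := by ring
    have e2 : 1 - (1 - l) = l := by ring
    have e3 : 1 - (-k + 1) = k := by ring
    simp only [e1, e2, e3]

/-- `y_j ∑_{l ≥ j} x_l M_{i l} = M_{i j} - N_{i, j+1}` -/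
lemma sum_right (x y : ℤ → A) (s : ℕ) (i j b : ℤ) (hb : i + s ≤ b) (hjb : j ≤ b) :
    y j * ∑ l ∈ Finset.Icc j b, x l * L1pow x y s i l =
      L1pow x y s i j - L1pow x y (s+1) i (j+1) := by
  rw [pow_succ_win x y s i (j+1) j b (by omega) hb, Finset.mul_sum]
  have : ∀ l ∈ Finset.Icc j b, L1pow x y s i l * L1e x y l (j+1) =
      (if l = j then L1pow x y s i l else 0) - y j * (x l * L1pow x y s i l) := by
    intro l hl
    simp only [Finset.mem_Icc] at hl
    unfold L1e
    rw [if_pos (by omega)]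
    have e1 : (l + 1 = j + 1) ↔ l = j := by omega
    have e2 : j + 1 - 1 = j := by ring
    simp only [e1, e2]
    split_ifs <;> ring
  rw [Finset.sum_congr rfl this, Finset.sum_sub_distrib, Finset.sum_ite_eq' ]
  rw [if_pos (by simp [hjb])]
  ring

lemma Icc_head (f : ℤ → A) (a b : ℤ) (h : a ≤ b) :
    ∑ l ∈ Finset.Icc a b, f l = f a + ∑ l ∈ Finset.Icc (a+1) b, f l := by
  have : Finset.Icc a b = insert a (Finset.Icc (a+1) b) := by
    ext l; simp only [Finset.mem_Icc, Finset.mem_insert]; omega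
  rw [this, Finset.sum_insert (by simp)]

lemma yA (x y : ℤ → A) (s : ℕ) (k : ℤ) :
    y k * Af x y s k = L1pow x y s (k+1) k - L1pow x y (s+1) (k+1) (k+1) := by
  rw [Af_win x y s k (k+1+s) le_rfl]
  exact sum_right x y s (k+1) k _ le_rfl (by omega)

lemma yA' (x y : ℤ → A) (s : ℕ) (k : ℤ) :
    y (k-1) * Af x y s k = (1 - x (k-1) * y (k-1)) * L1pow x y s (k+1) (k-1)
      - L1pow x y (s+1) (k+1) k := by
  have h := sum_right x y s (k+1) (k-1) (k+1+s) le_rfl (by omega)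
  rw [Icc_head _ _ _ (by omega), sub_add_cancel, ← Af_win x y s k _ le_rfl] at h
  linear_combination h

lemma xB (x y : ℤ → A) (s : ℕ) (k : ℤ) :
    x k * Bf x y s k = L1pow x y s (k+1) k - L1pow x y (s+1) k k := by
  have h := yA (fun k => y (-k)) (fun k => x (-k)) s (-k)
  rw [← Bf_refl, pow_refl, pow_refl] at h
  have e3 : 1 - (-k + 1) = k := by ring
  have e4 : 1 - (-k) = k + 1 := by ring
  simpa only [e3, e4, neg_neg] using h

lemma xB' (x y : ℤ → A) (s : ℕ) (k : ℤ) :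
    x (k+1) * Bf x y s k = (1 - x (k+1) * y (k+1)) * L1pow x y s (k+2) k
      - L1pow x y (s+1) (k+1) k := by
  have h := yA' (fun k => y (-k)) (fun k => x (-k)) s (-k)
  rw [← Bf_refl, pow_refl, pow_refl] at h
  have e3 : 1 - (-k + 1) = k := by ring
  have e4 : 1 - (-k) = k + 1 := by ring
  have e5 : -(-k-1) = k + 1 := by ring
  have e6 : 1 - (-k-1) = k + 2 := by ring
  simp only [e3, e4, e5, e6] at h
  rw [h]; ring

lemma DA {D : Derivation ℤ A A} {x y : ℤ → A} (h : IsT D x y) (s : ℕ) (k : ℤ) :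
    D (Af x y s k) = (1 - x (k+1) * y (k+1)) * Af x y s (k+1)
      - (1 - x (k-1) * y (k-1)) * Af x y s (k-1)
      + x k * (y (k+1) - y (k-1)) * Af x y s k
      + (x (k+1) - x (k-1)) * x k * Bf x y s k := by
  obtain ⟨b, hb⟩ : ∃ b : ℤ, b = k + s + 7 := ⟨_, rfl⟩
  have hA0 := Af_win x y s k b (by omega)
  have hA1 := Af_win x y s (k+1) b (by omega)
  have hA2 := Af_win x y s (k-1) b (by omega)
  rw [Icc_head _ (k-1) b (by omega)] at hA2
  have hA1' : ∑ l ∈ Finset.Icc k b, x l * L1pow x y s (k + 2) l =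
      x k * L1pow x y s (k+2) k + Af x y s (k+1) := by
    rw [Icc_head _ k b (by omega), hA1]
    have : k + 1 + 1 = k + 2 := by ring
    rw [this]
  have e1 : k - 1 + 1 = k := by ring
  rw [e1] at hA2
  have y1 := yA x y s (k-1)
  rw [e1] at y1
  have y2 := yA' x y s k
  have y3 := xB x y s k
  have y4 := xB' x y s k
  have key := tele' (fun l => x l * (1 - x (l-1) * y (l-1)) * L1pow x y s (k+1) (l-1)
      + x (l-1) * L1pow x y s (k+1) l) k b (by omega)
  rw [pow_zero' x y s (i := k+1) (j := b+1) (by omega),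
    pow_zero' x y s (i := k+1) (j := b+1-1) (by omega)] at key
  have main : D (Af x y s k) = (1 - x (k+1) * y (k+1)) *
        (∑ l ∈ Finset.Icc k b, x l * L1pow x y s (k + 2) l)
      + x k * y (k+1) * (∑ l ∈ Finset.Icc k b, x l * L1pow x y s (k + 1) l)
      - (∑ l ∈ Finset.Icc k b, x l * L1pow x y s k l)
      + (∑ l ∈ Finset.Icc k b, ((fun l => x l * (1 - x (l-1) * y (l-1)) * L1pow x y s (k+1) (l-1)
      + x (l-1) * L1pow x y s (k+1) l) (l+1) - (fun l => x l * (1 - x (l-1) * y (l-1)) * L1pow x y s (k+1) (l-1)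
      + x (l-1) * L1pow x y s (k+1) l) l)) := by
    rw [hA0, map_sum]
    simp only [Finset.mul_sum, ← Finset.sum_add_distrib, ← Finset.sum_sub_distrib]
    apply Finset.sum_congr rfl
    intro l _
    rw [Derivation.leibniz, laxM h, h.hx]
    have f : l + 1 - 1 = l := by ring
    have f2 : k + 1 + 1 = k + 2 := by ring
    have f3 : k + 1 - 1 = k := by ring
    simp only [f, f2, f3, smul_eq_mul]
    ring
  rw [main, key, hA1', ← hA0]
  linear_combination hA2 - x (k-1) * y1 + x k * y2 - x k * y4 + x (k-1) * y3

lemma DB {D : Derivation ℤ A A} {x y : ℤ → A} (h : IsT D x y) (s : ℕ) (k : ℤ) :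
    D (Bf x y s k) = (1 - x (k+1) * y (k+1)) * Bf x y s (k+1)
      - (1 - x (k-1) * y (k-1)) * Bf x y s (k-1)
      + y k * (x (k+1) - x (k-1)) * Bf x y s k
      + (y (k+1) - y (k-1)) * y k * Af x y s k := by
  have h0 := DA h.refl s (-k)
  have e1 : -(-k+1) = k - 1 := by ring
  have e2 : -(-k-1) = k + 1 := by ring
  have b0 := Bf_refl x y s k
  have b1 := Bf_refl x y s (k+1)
  have b2 := Bf_refl x y s (k-1)
  have e3 : -(k+1) = -k - 1 := by ring
  have e4 : -(k-1) = -k + 1 := by ring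
  rw [e3] at b1
  rw [e4] at b2
  have c0 := Bf_refl (fun k => y (-k)) (fun k => x (-k)) s (-k)
  simp only [neg_neg] at c0
  rw [c0, ← b0, ← b1, ← b2] at h0
  simp only [e1, e2, neg_neg, Derivation.neg_apply] at h0
  have c1 : Af (fun k => x k) (fun k => y k) s k = Af x y s k := rfl
  rw [c1] at h0
  linear_combination -h0

lemma Af_zero (x y : ℤ → A) (k : ℤ) : Af x y 0 k = x (k+1) := by
  unfold Af
  rw [Finset.sum_eq_single (k+1)]
  · simp [L1pow]
  · intro l _ h
    simp [L1pow, h.symm]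
  · intro h; simp at h

lemma Bf_zero (x y : ℤ → A) (k : ℤ) : Bf x y 0 k = y (k-1) := by
  unfold Bf
  rw [Finset.sum_eq_single k]
  · simp [L1pow]
  · intro l _ h
    simp [L1pow, h]
  · intro h; simp at h

lemma GamA_eq (N : ℕ) (u x y : ℤ → A) (k : ℤ) : GamA N u x y k = (1 - x k * y k) *
    ((∑ i ∈ Finset.Icc 1 N, u (i : ℤ) * Af x y (i-1) k) +
      ∑ i ∈ Finset.Icc 1 N, u (-(i : ℤ)) * Bf y x (i-1) k) + (k : A) * x k := by
  unfold GamA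
  congr 3
  · apply Finset.sum_congr rfl
    intro i hi
    simp only [Finset.mem_Icc] at hi
    unfold Af
    rw [Nat.sub_add_cancel hi.1]
  · apply Finset.sum_congr rfl
    intro i hi
    simp only [Finset.mem_Icc] at hi
    unfold Bf
    rw [Nat.sub_add_cancel hi.1]
    simp only [L2pow_eq]

lemma GamB_eq (N : ℕ) (u x y : ℤ → A) (k : ℤ) :
    GamB N u x y k = GamA N (fun i => u (-i)) y x k := by
  unfold GamA GamB
  have e : ∀ s i j, L1pow x y s i j = L2pow y x s j i := fun s i j => (L2pow_eq y x s j i).symm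
  simp only [e, L2pow_eq x y, neg_neg]
  rw [add_comm (∑ i ∈ Finset.Icc 1 N, u (i : ℤ) * _), mul_comm (x k)]

lemma sumD {D : Derivation ℤ A A} (N : ℕ) (hN : 1 ≤ N) (w : ℕ → A) (f : ℕ → A)
    (hw : ∀ i, 1 ≤ i → D (w i) = if i = 1 then 1 else 0) :
    D (∑ i ∈ Finset.Icc 1 N, w i * f i) = (∑ i ∈ Finset.Icc 1 N, w i * D (f i)) + f 1 := by
  rw [map_sum]
  have : ∀ i ∈ Finset.Icc 1 N, D (w i * f i) = w i * D (f i) + if i = 1 then f i else 0 := by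
    intro i hi
    rw [Derivation.leibniz, hw i (Finset.mem_Icc.1 hi).1]
    simp
  rw [Finset.sum_congr rfl this, Finset.sum_add_distrib, Finset.sum_ite_eq', if_pos]
  simp [hN]

lemma tangA {D : Derivation ℤ A A} {x y : ℤ → A} (h : IsT D x y) (N : ℕ) (hN : 1 ≤ N)
    (u : ℤ → A) (hu : ∀ i, D (u i) = if i = 1 ∨ i = -1 then 1 else 0) (k : ℤ) :
    D (GamA N u x y k) = (1 - x k * y k) * (GamA N u x y (k+1) - GamA N u x y (k-1))
      - (x (k+1) - x (k-1)) * (y k * GamA N u x y k - x k * GamB N u x y k) := by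
  have hA := sumD (D := D) N hN (fun i => u (i:ℤ)) (fun i => Af x y (i-1) k) (by
    intro i hi
    rw [hu]
    have : ((i:ℤ) = 1 ∨ (i:ℤ) = -1) ↔ i = 1 := by omega
    simp only [this])
  have hB := sumD (D := D) N hN (fun i => u (-(i:ℤ))) (fun i => Bf y x (i-1) k) (by
    intro i hi
    rw [hu]
    have : (-(i:ℤ) = 1 ∨ -(i:ℤ) = -1) ↔ i = 1 := by omega
    simp only [this])
  simp only [DA h, DB h.symm, Nat.sub_self, Af_zero, Bf_zero] at hA hB
  have hA' : D (∑ i ∈ Finset.Icc 1 N, u (i:ℤ) * Af x y (i-1) k) =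
      (1 - x (k+1) * y (k+1)) * (∑ i ∈ Finset.Icc 1 N, u (i:ℤ) * Af x y (i-1) (k+1))
      - (1 - x (k-1) * y (k-1)) * (∑ i ∈ Finset.Icc 1 N, u (i:ℤ) * Af x y (i-1) (k-1))
      + x k * (y (k+1) - y (k-1)) * (∑ i ∈ Finset.Icc 1 N, u (i:ℤ) * Af x y (i-1) k)
      + (x (k+1) - x (k-1)) * x k * (∑ i ∈ Finset.Icc 1 N, u (i:ℤ) * Bf x y (i-1) k)
      + x (k+1) := by
    rw [hA]
    simp only [Finset.mul_sum, ← Finset.sum_add_distrib, ← Finset.sum_sub_distrib]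
    congr 1
    exact Finset.sum_congr rfl (fun i _ => by ring)
  have hB' : D (∑ i ∈ Finset.Icc 1 N, u (-(i:ℤ)) * Bf y x (i-1) k) =
      (1 - x (k+1) * y (k+1)) * (∑ i ∈ Finset.Icc 1 N, u (-(i:ℤ)) * Bf y x (i-1) (k+1))
      - (1 - x (k-1) * y (k-1)) * (∑ i ∈ Finset.Icc 1 N, u (-(i:ℤ)) * Bf y x (i-1) (k-1))
      + x k * (y (k+1) - y (k-1)) * (∑ i ∈ Finset.Icc 1 N, u (-(i:ℤ)) * Bf y x (i-1) k)
      + (x (k+1) - x (k-1)) * x k * (∑ i ∈ Finset.Icc 1 N, u (-(i:ℤ)) * Af y x (i-1) k)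
      + x (k-1) := by
    rw [hB]
    simp only [Finset.mul_sum, ← Finset.sum_add_distrib, ← Finset.sum_sub_distrib]
    congr 1
    exact Finset.sum_congr rfl (fun i _ => by ring)
  rw [GamB_eq]
  simp only [GamA_eq, neg_neg]
  simp only [Derivation.leibniz, map_add, map_sub, Derivation.map_one_eq_zero, hA', hB', h.hx,
    h.hy, smul_eq_mul, Derivation.map_intCast]
  push_cast
  ring

lemma tangB {D : Derivation ℤ A A} {x y : ℤ → A} (h : IsT D x y) (N : ℕ) (hN : 1 ≤ N)
    (u : ℤ → A) (hu : ∀ i, D (u i) = if i = 1 ∨ i = -1 then 1 else 0) (k : ℤ) :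
    D (GamB N u x y k) = (1 - x k * y k) * (GamB N u x y (k+1) - GamB N u x y (k-1))
      + (y (k+1) - y (k-1)) * (y k * GamA N u x y k - x k * GamB N u x y k) := by
  have h0 := tangA h.symm N hN (fun i => u (-i)) (by
    intro i; rw [hu]
    have : (-i = 1 ∨ -i = -1) ↔ (i = 1 ∨ i = -1) := by omega
    simp only [this]) k
  simp only [← GamB_eq] at h0
  rw [GamB_eq N (fun i => u (-i))] at h0
  simp only [neg_neg] at h0
  have c1 : GamA N (fun i => u i) x y k = GamA N u x y k := rfl
  rw [c1] at h0
  rw [h0]; ring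

def mkDer (d : A →+ A) (hd : ∀ a b, d (a * b) = a * d b + b * d a) : Derivation ℤ A A :=
  Derivation.mk' d.toIntLinearMap (fun a b => hd a b)

end lattice

section laurent
variable {K : Type*} [Field K]

def euler (f : LaurentSeries K) : LaurentSeries K where
  coeff i := (i : K) * f.coeff i
  isPWO_support' := f.isPWO_support.mono (by
    intro i hi
    simp only [Function.mem_support, ne_eq] at hi
    simp only [HahnSeries.mem_support]
    intro h; apply hi; rw [h, mul_zero])

lemma euler_mul (f g : LaurentSeries K) : euler (f * g) = f * euler g + g * euler f := by
  ext m
  have hs : ∀ f : LaurentSeries K, (euler f).support ⊆ f.support := by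
    intro f i hi
    simp only [HahnSeries.mem_support, euler] at hi ⊢
    intro h; apply hi; rw [h, mul_zero]
  rw [mul_comm g, HahnSeries.coeff_add, HahnSeries.coeff_mul_left' f.isPWO_support (hs f),
    HahnSeries.coeff_mul_right' g.isPWO_support (hs g)]
  simp only [euler]
  rw [HahnSeries.coeff_mul, Finset.mul_sum, ← Finset.sum_add_distrib]
  apply Finset.sum_congr rfl
  intro ij hij
  have h3 : ij.1 + ij.2 = m := (Finset.mem_antidiagonal.1 hij).2.2
  rw [← h3]; push_cast; ring

def dt := mkDer (A := LaurentSeries K)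
    { toFun := fun f => HahnSeries.single (-1 : ℤ) (1 : K) * euler f
      map_zero' := by
        have : euler (0 : LaurentSeries K) = 0 := by ext i; simp [euler]
        rw [this, mul_zero]
      map_add' := fun f g => by
        have : euler (f + g) = euler f + euler g := by ext i; simp [euler, mul_add]
        rw [this, mul_add] }
    (fun f g => by
      change HahnSeries.single (-1 : ℤ) (1 : K) * euler (f * g) =
        f * (HahnSeries.single (-1 : ℤ) (1 : K) * euler g) +
        g * (HahnSeries.single (-1 : ℤ) (1 : K) * euler f)
      rw [euler_mul]; ring)

lemma dt_coeff (f : LaurentSeries K) (m : ℤ) :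
    (dt f).coeff m = ((m + 1 : ℤ) : K) * f.coeff (m + 1) := by
  change (HahnSeries.single (-1 : ℤ) (1 : K) * euler f).coeff m = _
  rw [HahnSeries.coeff_single_mul]
  simp [euler]

lemma O_add {f g : LaurentSeries K} {m : ℤ} (hf : BigO f m) (hg : BigO g m) : BigO (f + g) m := by
  intro i hi; rw [HahnSeries.coeff_add, hf i hi, hg i hi, add_zero]

lemma O_sub {f g : LaurentSeries K} {m : ℤ} (hf : BigO f m) (hg : BigO g m) : BigO (f - g) m := by
  intro i hi; rw [HahnSeries.coeff_sub, hf i hi, hg i hi, sub_zero]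

lemma O_mono {f : LaurentSeries K} {m k : ℤ} (hf : BigO f m) (h : k ≤ m) : BigO f k :=
  fun i hi => hf i (by omega)

lemma O_one : BigO (1 : LaurentSeries K) 0 := by
  intro i hi; rw [HahnSeries.coeff_one, if_neg (by omega)]

lemma O_mul {f g : LaurentSeries K} {a b c : ℤ} (hf : BigO f a) (hg : BigO g b) (hc : c ≤ a + b) :
    BigO (f * g) c := by
  intro i hi
  rw [HahnSeries.coeff_mul]
  apply Finset.sum_eq_zero
  intro p hp
  have h3 : p.1 + p.2 = i := (Finset.mem_antidiagonal.1 hp).2.2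
  by_cases h : p.1 < a
  · rw [hf _ h, zero_mul]
  · rw [hg _ (by omega), mul_zero]

lemma O_lead {f g : LaurentSeries K} {a b c : ℤ} (hf : BigO f a) (hg : BigO g b) (hc : a + b = c) :
    (f * g).coeff c = f.coeff a * g.coeff b := by
  rw [HahnSeries.coeff_mul, Finset.sum_eq_single (a, b)]
  · intro p hp hne
    have h3 : p.1 + p.2 = c := (Finset.mem_antidiagonal.1 hp).2.2
    by_cases h : p.1 < a
    · rw [hf _ h, zero_mul]
    · by_cases h' : p.2 < b
      · rw [hg _ h', mul_zero]
      · exfalso; apply hne; ext <;> simp <;> omega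
  · intro h
    by_contra hne
    apply h
    have h1 := left_ne_zero_of_mul hne
    have h2 := right_ne_zero_of_mul hne
    exact Finset.mem_antidiagonal.2 ⟨h1, h2, hc⟩

lemma O_step [CharZero K] {f : LaurentSeries K} {m : ℤ} (hm : m ≠ 0) (hf : BigO f m)
    (hd : (dt f).coeff (m - 1) = 0) : BigO f (m + 1) := by
  intro i hi
  rcases eq_or_lt_of_le (show i ≤ m by omega) with h | h
  · subst h
    rw [dt_coeff, sub_add_cancel] at hd
    rcases mul_eq_zero.1 hd with h | h
    · exact absurd (by exact_mod_cast h) hm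
    · exact h
  · exact hf i h

lemma O_dt {f : LaurentSeries K} {m : ℤ} (hf : BigO f m) : BigO (dt f) (m - 1) := by
  intro i hi
  rw [dt_coeff, hf _ (by omega), mul_zero]

lemma O_coeff {f : LaurentSeries K} {m i : ℤ} (hf : BigO f m) (hi : i < m) : f.coeff i = 0 := hf i hi

/-- a product with a factor of known exact order: cancel it -/
lemma O_cancel {f g : LaurentSeries K} {a b : ℤ} (hf : BigO f a) (hfa : f.coeff a ≠ 0)
    (hfg : BigO (f * g) (a + b + 1)) (hg : BigO g b) : BigO g (b + 1) := by
  intro i hi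
  rcases eq_or_lt_of_le (show i ≤ b by omega) with h | h
  · subst h
    have h1 := O_lead hf hg rfl
    rw [hfg _ (by omega)] at h1
    exact (mul_eq_zero.1 h1.symm).resolve_left hfa
  · exact hg i h

/-- same without a-priori bound, stated by descending from the support bound -/
lemma O_cancel' {f g : LaurentSeries K} {a b : ℤ} (hf : BigO f a) (hfa : f.coeff a ≠ 0)
    (hfg : BigO (f * g) (a + b)) : BigO g b := by
  by_cases hg0 : g = 0
  · intro i _; rw [hg0]; rfl
  have hg : BigO g g.order := fun i hi => HahnSeries.coeff_eq_zero_of_lt_order hi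
  by_cases h : b ≤ g.order
  · exact O_mono hg h
  · exfalso
    have h1 := O_lead hf hg rfl
    rw [hfg _ (by omega)] at h1
    rcases mul_eq_zero.1 h1.symm with h2 | h2
    · exact hfa h2
    · exact HahnSeries.coeff_order_eq_zero.not.2 hg0 h2

lemma uniq [CharZero K] (x y G H : ℤ → LaurentSeries K) (n : ℤ) (p q : K)
    (hp : p ≠ 0) (hq : q ≠ 0) (hD : q - p ≠ 0)
    (hnopole : ∀ k, k ≠ n → BigO (x k) 0 ∧ BigO (y k) 0)
    (hx1 : (x (n + 1)).coeff 0 = p) (hx1' : (x (n - 1)).coeff 0 = q)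
    (hy1 : (y (n + 1)).coeff 0 = p⁻¹) (hy1' : (y (n - 1)).coeff 0 = q⁻¹)
    (hxn : BigO (x n) (-1)) (hyn : BigO (y n) (-1))
    (hxnc : (x n).coeff (-1) = q * p / (q - p))
    (hync : (y n).coeff (-1) = -1 / (q - p))
    (tG : ∀ k, dt (G k) = (1 - x k * y k) * (G (k+1) - G (k-1))
      - (x (k+1) - x (k-1)) * (y k * G k - x k * H k))
    (tH : ∀ k, dt (H k) = (1 - x k * y k) * (H (k+1) - H (k-1))
      + (y (k+1) - y (k-1)) * (y k * G k - x k * H k))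
    (hO1 : ∀ k, k ≠ n + 1 → BigO (G k) 1 ∧ BigO (H k) 1)
    (hO2 : BigO (G (n - 1)) 2) :
    ∀ k, G k = 0 ∧ H k = 0 := by
  have np1 : n + 1 ≠ n := by omega
  have nm1 : n - 1 ≠ n := by omega
  have np2 : n + 1 + 1 ≠ n := by omega
  have nm2 : n - 1 - 1 ≠ n := by omega
  have ep : n + 1 - 1 = n := by ring
  have em : n - 1 + 1 = n := by ring
  have vreg : ∀ k, k ≠ n → BigO (1 - x k * y k) 0 := fun k hk =>
    O_sub O_one (O_mul (hnopole k hk).1 (hnopole k hk).2 (by omega))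
  have vone : ∀ k, k ≠ n → (x k).coeff 0 * (y k).coeff 0 = 1 → BigO (1 - x k * y k) 1 := by
    intro k hk h1 i hi
    rcases eq_or_lt_of_le (show i ≤ 0 by omega) with h | h
    · subst h
      rw [HahnSeries.coeff_sub, O_lead (hnopole k hk).1 (hnopole k hk).2 (by omega), h1]
      simp
    · exact vreg k hk i h
  have vp : BigO (1 - x (n+1) * y (n+1)) 1 := vone _ np1 (by rw [hx1, hy1, mul_inv_cancel₀ hp])
  have vm : BigO (1 - x (n-1) * y (n-1)) 1 := vone _ nm1 (by rw [hx1', hy1', mul_inv_cancel₀ hq])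
  have vn : BigO (1 - x n * y n) (-2) := O_sub (O_mono O_one (by omega)) (O_mul hxn hyn (by omega))
  have vnc : (1 - x n * y n).coeff (-2) ≠ 0 := by
    rw [HahnSeries.coeff_sub, O_lead hxn hyn (by omega), hxnc, hync, O_one _ (by omega)]
    field_simp
    simp [hp, hq, hD]
  have dxp : BigO (x (n+1+1) - x n) (-1) := O_sub (O_mono (hnopole _ np2).1 (by omega)) hxn
  have dyp : BigO (y (n+1+1) - y n) (-1) := O_sub (O_mono (hnopole _ np2).2 (by omega)) hyn
  have dxm : BigO (x n - x (n-1-1)) (-1) := O_sub hxn (O_mono (hnopole _ nm2).1 (by omega))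
  have dym : BigO (y n - y (n-1-1)) (-1) := O_sub hyn (O_mono (hnopole _ nm2).2 (by omega))
  have dxpc : (x (n+1+1) - x n).coeff (-1) = -(q * p / (q - p)) := by
    rw [HahnSeries.coeff_sub, (hnopole _ np2).1 _ (by omega), hxnc, zero_sub]
  have dypc : (y (n+1+1) - y n).coeff (-1) = -(-1 / (q - p)) := by
    rw [HahnSeries.coeff_sub, (hnopole _ np2).2 _ (by omega), hync, zero_sub]
  have dxmc : (x n - x (n-1-1)).coeff (-1) = q * p / (q - p) := by
    rw [HahnSeries.coeff_sub, (hnopole _ nm2).1 _ (by omega), hxnc, sub_zero]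
  have dymc : (y n - y (n-1-1)).coeff (-1) = -1 / (q - p) := by
    rw [HahnSeries.coeff_sub, (hnopole _ nm2).2 _ (by omega), hync, sub_zero]
  have dxn : BigO (x (n+1) - x (n-1)) 0 := O_sub (hnopole _ np1).1 (hnopole _ nm1).1
  have dyn : BigO (y (n+1) - y (n-1)) 0 := O_sub (hnopole _ np1).2 (hnopole _ nm1).2
  have tGp := tG (n+1)
  have tHp := tH (n+1)
  have tGm := tG (n-1)
  have tHm := tH (n-1)
  rw [ep] at tGp tHp
  rw [em] at tGm tHm
  -- orders of w
  have wn : ∀ m : ℤ, BigO (G n) m → BigO (H n) m → BigO (y n * G n - x n * H n) (m - 1) :=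
    fun m h1 h2 => O_sub (O_mul hyn h1 (by omega)) (O_mul hxn h2 (by omega))
  have wk : ∀ k, k ≠ n → ∀ m : ℤ, BigO (G k) m → BigO (H k) m →
      BigO (y k * G k - x k * H k) m :=
    fun k hk m h1 h2 => O_sub (O_mul (hnopole k hk).2 h1 (by omega))
      (O_mul (hnopole k hk).1 h2 (by omega))
  have wkc : ∀ k, k ≠ n → ∀ m : ℤ, BigO (G k) m → BigO (H k) m →
      (y k * G k - x k * H k).coeff m =
        (y k).coeff 0 * (G k).coeff m - (x k).coeff 0 * (H k).coeff m := by
    intro k hk m h1 h2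
    rw [HahnSeries.coeff_sub, O_lead (hnopole k hk).2 h1 (by omega),
      O_lead (hnopole k hk).1 h2 (by omega)]
  -- regular sites
  have reg : ∀ m : ℤ, 1 ≤ m → (∀ k, k ≠ n → BigO (G k) m ∧ BigO (H k) m) →
      ∀ k, k ≠ n → k ≠ n + 1 → k ≠ n - 1 → BigO (G k) (m+1) ∧ BigO (H k) (m+1) := by
    intro m hm hall k h0 h1 h2
    have hkp := hall (k+1) (by omega)
    have hkm := hall (k-1) (by omega)
    have hk := hall k h0
    have xp := hnopole (k+1) (by omega)
    have xm := hnopole (k-1) (by omega)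
    constructor
    · apply O_step (by omega) hk.1
      rw [tG]
      have hb : BigO ((1 - x k * y k) * (G (k+1) - G (k-1))
        - (x (k+1) - x (k-1)) * (y k * G k - x k * H k)) m :=
        O_sub (O_mul (vreg k h0) (O_sub hkp.1 hkm.1) (by omega))
          (O_mul (O_sub xp.1 xm.1) (wk k h0 m hk.1 hk.2) (by omega))
      exact hb _ (by omega)
    · apply O_step (by omega) hk.2
      rw [tH]
      have hb : BigO ((1 - x k * y k) * (H (k+1) - H (k-1))
        + (y (k+1) - y (k-1)) * (y k * G k - x k * H k)) m :=
        O_add (O_mul (vreg k h0) (O_sub hkp.2 hkm.2) (by omega))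
          (O_mul (O_sub xp.2 xm.2) (wk k h0 m hk.1 hk.2) (by omega))
      exact hb _ (by omega)
  -- base
  have hn0 := hO1 n (by omega)
  have hm0 := hO1 (n-1) (by omega)
  have hwn0 := wn 1 hn0.1 hn0.2
  have gdiff : BigO (G (n+1) - G (n-1)) 2 := by
    apply O_cancel' vn vnc
    have : (1 - x n * y n) * (G (n+1) - G (n-1)) = dt (G n) +
      (x (n+1) - x (n-1)) * (y n * G n - x n * H n) := by rw [tG]; ring
    rw [this]
    exact O_add (O_mono (O_dt hn0.1) (by omega)) (O_mul dxn hwn0 (by omega))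
  have hdiff : BigO (H (n+1) - H (n-1)) 2 := by
    apply O_cancel' vn vnc
    have : (1 - x n * y n) * (H (n+1) - H (n-1)) = dt (H n) -
      (y (n+1) - y (n-1)) * (y n * G n - x n * H n) := by rw [tH]; ring
    rw [this]
    exact O_sub (O_mono (O_dt hn0.2) (by omega)) (O_mul dyn hwn0 (by omega))
  have gp2 : BigO (G (n+1)) 2 := by
    have := O_add gdiff hO2
    rwa [sub_add_cancel] at this
  have hm2 : BigO (H (n-1)) 2 := by
    have h1 : BigO (y (n-1) * G (n-1) - x (n-1) * H (n-1)) 2 := by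
      apply O_cancel' dxm (by rw [dxmc]; exact div_ne_zero (mul_ne_zero hq hp) hD)
      have : (x n - x (n-1-1)) * (y (n-1) * G (n-1) - x (n-1) * H (n-1)) =
        (1 - x (n-1) * y (n-1)) * (G n - G (n-1-1)) - dt (G (n-1)) := by rw [tGm]; ring
      rw [this]
      exact O_sub (O_mul vm (O_sub hn0.1 (hO1 (n-1-1) (by omega)).1) (by omega))
        (O_mono (O_dt hO2) (by omega))
    have h2 : BigO (x (n-1) * H (n-1)) 2 := by
      have h3 := O_sub (O_mul (c := 2) (hnopole _ nm1).2 hO2 (by omega)) h1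
      rwa [sub_sub_cancel] at h3
    exact O_cancel' (b := 2) (hnopole _ nm1).1 (by rw [hx1']; exact hq) (by simpa using h2)
  have hp2 : BigO (H (n+1)) 2 := by
    have := O_add hdiff hm2
    rwa [sub_add_cancel] at this
  have all1 : ∀ k, k ≠ n → BigO (G k) 1 ∧ BigO (H k) 1 := by
    intro k _
    by_cases h : k = n + 1
    · subst h; exact ⟨O_mono gp2 (by omega), O_mono hp2 (by omega)⟩
    · exact hO1 k h
  have main : ∀ j : ℕ, (∀ k, k ≠ n → BigO (G k) (j+2) ∧ BigO (H k) (j+2)) ∧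
      BigO (G n) (j+1) ∧ BigO (H n) (j+1) := by
    intro j
    induction j with
    | zero =>
      simp only [Nat.cast_zero, zero_add]
      refine ⟨?_, hn0⟩
      intro k hk
      by_cases h1 : k = n + 1
      · subst h1; exact ⟨gp2, hp2⟩
      by_cases h2 : k = n - 1
      · subst h2; exact ⟨hO2, hm2⟩
      exact reg 1 le_rfl all1 k hk h1 h2
    | succ j ih =>
      obtain ⟨m, hm⟩ : ∃ m : ℤ, m = j + 2 := ⟨_, rfl⟩
      have e1 : ((j + 1 : ℕ) : ℤ) + 2 = m + 1 := by push_cast; omega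
      have e2 : ((j + 1 : ℕ) : ℤ) + 1 = m := by push_cast; omega
      have e3 : (j : ℤ) + 1 = m - 1 := by omega
      rw [e1, e2]
      rw [← hm, e3] at ih
      obtain ⟨ihk, ihG, ihH⟩ := ih
      have mK : (m : K) ≠ 0 := by
        have : m ≠ 0 := by omega
        exact_mod_cast this
      have mK1 : (m : K) - 1 ≠ 0 := by
        have : m - 1 ≠ 0 := by omega
        exact_mod_cast this
      have mK2 : (m : K) + 1 ≠ 0 := by
        have : m + 1 ≠ 0 := by omega
        exact_mod_cast this
      have extend : ∀ f : LaurentSeries K, ∀ r : ℤ, BigO f r → f.coeff r = 0 → BigO f (r+1) := by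
        intro f r h1 h2 i hi
        rcases eq_or_lt_of_le (show i ≤ r by omega) with h | h
        · rw [h, h2]
        · exact h1 i h
      -- site n+1
      have P : BigO (G (n+1)) (m+1) ∧ BigO (H (n+1)) (m+1) := by
        obtain ⟨g1, g2⟩ := ihk (n+1) np1
        have g3 := ihk (n+1+1) np2
        have w1 := wk _ np1 m g1 g2
        have w2 := wkc _ np1 m g1 g2
        have a1 := congrArg (fun f => f.coeff (m-1)) tGp
        have a2 := congrArg (fun f => f.coeff (m-1)) tHp
        simp only [dt_coeff, HahnSeries.coeff_sub, HahnSeries.coeff_add, sub_add_cancel] at a1 a2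
        rw [O_mul (c := m) vp (O_sub (O_mono g3.1 (by omega)) ihG) (by omega) (m-1) (by omega),
          O_lead dxp w1 (by omega), dxpc, w2, hx1, hy1] at a1
        rw [O_mul (c := m) vp (O_sub (O_mono g3.2 (by omega)) ihH) (by omega) (m-1) (by omega),
          O_lead dyp w1 (by omega), dypc, w2, hx1, hy1] at a2
        set g := (G (n+1)).coeff m
        set h := (H (n+1)).coeff m
        have S : p⁻¹ * g - p * h = 0 := by
          have : ((m:K) - 1) * (p⁻¹ * g - p * h) = 0 := by
            field_simp at a1 a2 ⊢
            apply mul_left_cancel₀ hD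
            linear_combination a1 - p * a2
          exact (mul_eq_zero.1 this).resolve_left mK1
        rw [S] at a1 a2
        simp only [mul_zero, sub_zero, add_zero, mul_eq_zero, mK, false_or] at a1 a2
        exact ⟨extend _ _ g1 a1, extend _ _ g2 a2⟩
      have M : BigO (G (n-1)) (m+1) ∧ BigO (H (n-1)) (m+1) := by
        obtain ⟨g1, g2⟩ := ihk (n-1) nm1
        have g3 := ihk (n-1-1) nm2
        have w1 := wk _ nm1 m g1 g2
        have w2 := wkc _ nm1 m g1 g2
        have a1 := congrArg (fun f => f.coeff (m-1)) tGm
        have a2 := congrArg (fun f => f.coeff (m-1)) tHm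
        simp only [dt_coeff, HahnSeries.coeff_sub, HahnSeries.coeff_add, sub_add_cancel] at a1 a2
        rw [O_mul (c := m) vm (O_sub ihG (O_mono g3.1 (by omega))) (by omega) (m-1) (by omega),
          O_lead dxm w1 (by omega), dxmc, w2, hx1', hy1'] at a1
        rw [O_mul (c := m) vm (O_sub ihH (O_mono g3.2 (by omega))) (by omega) (m-1) (by omega),
          O_lead dym w1 (by omega), dymc, w2, hx1', hy1'] at a2
        set g := (G (n-1)).coeff m
        set h := (H (n-1)).coeff m
        have S : q⁻¹ * g - q * h = 0 := by
          have : ((m:K) - 1) * (q⁻¹ * g - q * h) = 0 := by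
            field_simp at a1 a2 ⊢
            apply mul_left_cancel₀ hD
            linear_combination a1 - q * a2
          exact (mul_eq_zero.1 this).resolve_left mK1
        rw [S] at a1 a2
        simp only [mul_zero, sub_zero, add_zero, mul_eq_zero, mK, false_or] at a1 a2
        exact ⟨extend _ _ g1 a1, extend _ _ g2 a2⟩
      refine ⟨?_, ?_⟩
      · intro k hk
        by_cases h1 : k = n + 1
        · subst h1; exact P
        by_cases h2 : k = n - 1
        · subst h2; exact M
        exact reg m (by omega) ihk k hk h1 h2
      · have w1 := wn _ ihG ihH
        have w2 : (y n * G n - x n * H n).coeff (m - 1 - 1) =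
            (-1 / (q - p)) * (G n).coeff (m-1) - (q * p / (q - p)) * (H n).coeff (m-1) := by
          rw [HahnSeries.coeff_sub, O_lead hyn ihG (by omega), O_lead hxn ihH (by omega), hxnc, hync]
        have a1 := congrArg (fun f => f.coeff (m-1-1)) (tG n)
        have a2 := congrArg (fun f => f.coeff (m-1-1)) (tH n)
        rw [HahnSeries.coeff_sub] at a1
        rw [HahnSeries.coeff_add] at a2
        simp only [dt_coeff, sub_add_cancel] at a1 a2
        rw [O_mul (c := m-1) vn (O_sub P.1 M.1) (by omega) (m-1-1) (by omega),
          O_lead dxn w1 (by omega), w2, HahnSeries.coeff_sub, hx1, hx1'] at a1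
        rw [O_mul (c := m-1) vn (O_sub P.2 M.2) (by omega) (m-1-1) (by omega),
          O_lead dyn w1 (by omega), w2, HahnSeries.coeff_sub, hy1, hy1'] at a2
        set g := (G n).coeff (m-1)
        set h := (H n).coeff (m-1)
        push_cast at a1 a2
        have S : (-1 / (q - p)) * g - (q * p / (q - p)) * h = 0 := by
          have : ((m:K) + 1) * ((-1 / (q - p)) * g - (q * p / (q - p)) * h) = 0 := by
            field_simp at a1 a2 ⊢
            apply mul_left_cancel₀ hD
            linear_combination -a1 - (q - p) * a2
          exact (mul_eq_zero.1 this).resolve_left mK2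
        rw [S] at a1 a2
        simp only [mul_zero, sub_zero, add_zero, mul_eq_zero, mK1, false_or] at a1 a2
        have r1 := extend _ _ ihG a1
        have r2 := extend _ _ ihH a2
        rw [sub_add_cancel] at r1 r2
        exact ⟨r1, r2⟩
  have fin : ∀ f : LaurentSeries K, (∀ j : ℕ, BigO f (j+1)) → f = 0 := by
    intro f hf
    ext i
    rw [HahnSeries.coeff_zero]
    exact hf i.toNat i (by omega)
  intro k
  by_cases hk : k = n
  · subst hk
    exact ⟨fin _ (fun j => (main j).2.1), fin _ (fun j => (main j).2.2)⟩
  · exact ⟨fin _ (fun j => O_mono ((main j).1 k hk).1 (by omega)),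
      fin _ (fun j => O_mono ((main j).1 k hk).2 (by omega))⟩

lemma isT_of {x y : ℤ → LaurentSeries K} (h : IsSolT x y) : IsT dt x y := by
  constructor
  · intro k; ext m; rw [dt_coeff]; exact (h k m).1
  · intro k; ext m; rw [dt_coeff]; exact (h k m).2

lemma dt_ut (c : K) (i : ℤ) : dt (HahnSeries.C c +
      (if i = 1 ∨ i = -1 then HahnSeries.single (1 : ℤ) (1 : K) else 0) : LaurentSeries K) =
      if i = 1 ∨ i = -1 then 1 else 0 := by
  have h1 : dt (HahnSeries.C c : LaurentSeries K) = 0 := by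
    ext m
    rw [dt_coeff, HahnSeries.C_apply, HahnSeries.coeff_zero]
    by_cases h : m + 1 = 0
    · rw [h]; simp
    · rw [HahnSeries.coeff_single_of_ne h, mul_zero]
  have h2 : dt (HahnSeries.single (1 : ℤ) (1 : K) : LaurentSeries K) = 1 := by
    ext m
    rw [dt_coeff, HahnSeries.coeff_one]
    by_cases h : m = 0
    · subst h; simp
    · rw [HahnSeries.coeff_single_of_ne (by omega), mul_zero, if_neg h]
  rw [map_add, h1, zero_add]
  split_ifs
  · exact h2
  · exact map_zero _

end laurent
end Tg

variable (F : Type*) [Field F] [CharZero F] (n : ℤ) (N : ℕ)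

/-- In the setting of the general tangency proposition, suppose in addition
that `Γ_k(t) = O(t)` and `Γ̃_k(t) = O(t)` for all `k ≠ n + 1`, that `Γ_{n-1}(t) = O(t²)`,
and that `Γ_{n+1}(t) = O(t)`. Then `Γ_k(t) = 0 = Γ̃_k(t)` for all `k ∈ ℤ`. -/
theorem statement7 (hN : 1 ≤ N)
    (u : ℤ → F) (huN : u (N : ℤ) ≠ 0) (huN' : u (-(N : ℤ)) ≠ 0)
    (x y : ℤ → LaurentSeries F) (hsol : IsSolT x y)
    (an1 am1 ap am : F)
    (hnopole : ∀ k, k ≠ n → BigO (x k) 0 ∧ BigO (y k) 0)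
    (hv : ∀ k, 2 ≤ |k - n| → 1 - (x k).coeff 0 * (y k).coeff 0 ≠ 0)
    (hx1 : (x (n + 1)).coeff 0 = an1) (hx1' : (x (n - 1)).coeff 0 = am1)
    (hy1 : (y (n + 1)).coeff 0 = an1⁻¹) (hy1' : (y (n - 1)).coeff 0 = am1⁻¹)
    (hx1t : (x (n + 1)).coeff 1 = an1 * ap) (hx1t' : (x (n - 1)).coeff 1 = am1 * am)
    (hy1t : (y (n + 1)).coeff 1 = -(ap / am1)) (hy1t' : (y (n - 1)).coeff 1 = -(am / an1))
    (hreg : an1 * am1 * (an1 - am1) ≠ 0) (hreg' : ap * am ≠ 0)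
    (hxn : BigO (x n) (-1)) (hyn : BigO (y n) (-1))
    (hxnc : (x n).coeff (-1) = am1 * an1 / (am1 - an1))
    (hync : (y n).coeff (-1) = -1 / (am1 - an1))
    (ut : ℤ → LaurentSeries F)
    (hut : ∀ i : ℤ, ut i = HahnSeries.C (u i) +
      (if i = 1 ∨ i = -1 then HahnSeries.single (1 : ℤ) (1 : F) else 0))
    (G Gt : ℤ → LaurentSeries F)
    (hG : ∀ k, G k = GamA N ut x y k) (hGt : ∀ k, Gt k = GamB N ut x y k)
    -- the additional hypotheses:
    (hO1 : ∀ k, k ≠ n + 1 → BigO (G k) 1 ∧ BigO (Gt k) 1)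
    (hO2 : BigO (G (n - 1)) 2)
    (hO3 : BigO (G (n + 1)) 1) :
    ∀ k, G k = 0 ∧ Gt k = 0 := by
  have hT := Tg.isT_of hsol
  have hu : ∀ i, Tg.dt (ut i) = if i = 1 ∨ i = -1 then 1 else 0 := by
    intro i; rw [hut]; exact Tg.dt_ut (u i) i
  have h3 : am1 - an1 ≠ 0 := by
    intro h; apply hreg
    have : an1 - am1 = 0 := by linear_combination -h
    rw [this, mul_zero]
  have h1 : an1 ≠ 0 := by rintro rfl; simp at hreg
  have h2 : am1 ≠ 0 := by rintro rfl; simp at hreg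
  refine Tg.uniq x y G Gt n an1 am1 h1 h2 h3 hnopole hx1 hx1' hy1 hy1' hxn hyn hxnc hync
    ?_ ?_ hO1 hO2
  · intro k
    simp only [hG, hGt]
    exact Tg.tangA hT N hN ut hu k
  · intro k
    simp only [hG, hGt]
    exact Tg.tangB hT N hN ut hu k
end
end
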